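/- Let S = k[x_1,…,x_{d+2}] with d ≥ 2 and R = S/(f,g) where f,g is a homogeneous S-regular sequence of degree-2 forms. Let E be a torsion-free R-module of rank e and projective dimension one with μ(E) = d+e, minimal free resolution 0 → R^d →φ R^{d+e} → E → 0 with φ consisting of linear entries, E satisfying G_d and I_1(φ) = (x_1,…,x_{d+2})R. Let A = H^0_m(S(E)) with m = (x_1,…,x_{d+2}), and let σ = B(ψ) be the (d+2)×d Jacobian dual of the lift ψ of φ. If ht I(σ) = 3, then the T-module A_1 is minimally generated by d+2 equations of bidegree (1, 2d). -/

import Mathlib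

/-!
STATEMENT 15: With `S`, `R = S/(f,g)`, `E`, `ψ` as in Statement 12, `A = H⁰_m(S(E))`
and `σ = B(ψ)` the `(d+2)×d` Jacobian dual: if `ht I(σ) = 3` then the `T`-module `A_1`
is minimally generated by `d+2` equations of bidegree `(1, 2d)`.
-/

open MvPolynomial

noncomputable section

namespace Stmt15

variable (k : Type) [Field k] (d n : ℕ)

/-- `B = R ⊗_k T = k[x_1,…,x_d,y_1,…,y_n]`. -/
abbrev B := MvPolynomial (Fin d ⊕ Fin n) k

/-- `T = k[y_1,…,y_n]`. -/
abbrev T := MvPolynomial (Fin n) k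

/-- `B` is a `T`-algebra via `y_j ↦ y_j`. -/
instance : Algebra (T k n) (B k d n) :=
  ((rename Sum.inr : T k n →ₐ[k] B k d n).toRingHom).toAlgebra

/-- The bigrading weight: `bideg x_i = (1,0)`, `bideg y_j = (0,1)`. -/
def bwt : (Fin d ⊕ Fin n) → ℕ × ℕ := Sum.elim (fun _ => (1, 0)) (fun _ => (0, 1))

/-- The `x`-degree weight. -/
def wx : (Fin d ⊕ Fin n) → ℕ := Sum.elim (fun _ => 1) (fun _ => 0)

/-- The ideal `m = (x_1,…,x_d)B`. -/
def mxB : Ideal (B k d n) := Ideal.span (Set.range fun i : Fin d => (X (Sum.inl i) : B k d n))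

variable (I : Ideal (B k d n))

/-- `A = H⁰_m(S)`: elements of `S = B/I` annihilated by a power of `m`. -/
def H0 : Submodule (B k d n) (B k d n ⧸ I) :=
  ⨆ N : ℕ, Submodule.torsionBySet (B k d n) (B k d n ⧸ I)
    ((mxB k d n ^ N : Ideal (B k d n)) : Set (B k d n))

/-- The bigraded component of `S = B/I` in bidegree `p`. -/
def Scomp (p : ℕ × ℕ) : Submodule k (B k d n ⧸ I) :=
  (weightedHomogeneousSubmodule k (bwt d n) p).map (Ideal.Quotient.mkₐ k I).toLinearMap

/-- The graded strand `S_j = ⊕_b S_{(j,b)}` of `S` in `x`-degree `j`, as a `T`-module. -/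
def SxDeg (j : ℕ) : Submodule (T k n) (B k d n ⧸ I) :=
  Submodule.span (T k n) ((Ideal.Quotient.mk I) '' {g : B k d n | g.IsWeightedHomogeneous (wx d n) j})

/-- The graded strand of `S` in (possibly negative) `x`-degree `i : ℤ`. -/
def SxDegZ (i : ℤ) : Submodule (T k n) (B k d n ⧸ I) :=
  if 0 ≤ i then SxDeg k d n I i.toNat else ⊥

/-- The graded strand `A_i = ⊕_b A_{(i,b)}` of `A = H⁰_m(S)`, as a `T`-module. -/
def AcompZ (i : ℤ) : Submodule (T k n) (B k d n ⧸ I) :=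
  (H0 k d n I).restrictScalars (T k n) ⊓ SxDegZ k d n I i

/-- The graded component of `T` in (possibly negative) degree `j`. -/
def TcompZ (j : ℤ) : Submodule k (T k n) :=
  if 0 ≤ j then homogeneousSubmodule (Fin n) k j.toNat else ⊥

/-- The ideal of `t × t` minors of a matrix. -/
def minorsIdeal {R : Type} [CommRing R] {m' n' : Type} (M : Matrix m' n' R) (t : ℕ) :
    Ideal R :=
  Ideal.span {x | ∃ (f : Fin t → m') (g : Fin t → n'), x = (M.submatrix f g).det}

/-- `ht I ≥ c`: every prime containing `I` has height (= dimension of the localization)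
at least `c`. -/
def htGE {R : Type} [CommRing R] (I : Ideal R) (c : ℕ) : Prop :=
  ∀ (p : Ideal R) (_ : p.IsPrime), I ≤ p →
    (c : WithBot ℕ∞) ≤ ringKrullDim (Localization.AtPrime p)

section helpers
set_option linter.unusedSectionVars false
set_option linter.unusedVariables false

section part1

section Wpart
variable {A : Type} [CommRing A] {d : ℕ}

/-- the matrix `[σ | u | v]` -/
def Wmat (σ : Matrix (Fin (d+2)) (Fin d) A) (u v : Fin (d+2) → A) :
    Matrix (Fin (d+2)) (Fin (d+2)) A :=
  Matrix.of fun i => Fin.append (σ i) ![u i, v i]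

def Wd (σ : Matrix (Fin (d+2)) (Fin d) A) (u v : Fin (d+2) → A) : A := (Wmat σ u v).det

def W (σ : Matrix (Fin (d+2)) (Fin d) A) (a b : Fin (d+2)) : A :=
  Wd σ (Pi.single a 1) (Pi.single b 1)

def c0 : Fin (d+2) := Fin.natAdd d 0
def c1 : Fin (d+2) := Fin.natAdd d 1

lemma Wmat_castAdd (σ : Matrix (Fin (d+2)) (Fin d) A) (u v : Fin (d+2) → A) (i) (j : Fin d) :
    Wmat σ u v i (Fin.castAdd 2 j) = σ i j := by simp [Wmat]
lemma Wmat_c0 (σ : Matrix (Fin (d+2)) (Fin d) A) (u v : Fin (d+2) → A) (i) :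
    Wmat σ u v i c0 = u i := by simp only [Wmat, c0, Matrix.of_apply, Fin.append_right]; simp
lemma Wmat_c1 (σ : Matrix (Fin (d+2)) (Fin d) A) (u v : Fin (d+2) → A) (i) :
    Wmat σ u v i c1 = v i := by simp only [Wmat, c1, Matrix.of_apply, Fin.append_right]; simp

lemma fcases (P : Fin (d+2) → Prop) (h1 : ∀ j : Fin d, P (Fin.castAdd 2 j)) (h2 : P c0) (h3 : P c1) :
    ∀ j, P j := by
  intro j
  refine Fin.addCases h1 ?_ j
  intro i; fin_cases i
  · exact h2
  · exact h3

lemma sum_split (F : Fin (d+2) → A) :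
    ∑ j, F j = ∑ j : Fin d, F (Fin.castAdd 2 j) + F c0 + F c1 := by
  rw [Fin.sum_univ_add, Fin.sum_univ_two, ← add_assoc]; rfl

lemma castAdd_ne_c0 (j : Fin d) : Fin.castAdd 2 j ≠ c0 := by
  intro h; have := congrArg Fin.val h; simp [c0] at this; omega
lemma castAdd_ne_c1 (j : Fin d) : Fin.castAdd 2 j ≠ c1 := by
  intro h; have := congrArg Fin.val h; simp [c1] at this; omega
lemma c0_ne_c1 : (c0 : Fin (d+2)) ≠ c1 := by
  intro h; have := congrArg Fin.val h; simp [c0, c1] at this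

lemma Wmat_update_c0 (σ : Matrix (Fin (d+2)) (Fin d) A) (u v w : Fin (d+2) → A) :
    (Wmat σ u v).updateCol c0 w = Wmat σ w v := by
  ext i j; revert j; refine fcases _ ?_ ?_ ?_
  · intro j; rw [Matrix.updateCol_ne (castAdd_ne_c0 j), Wmat_castAdd, Wmat_castAdd]
  · rw [Matrix.updateCol_self, Wmat_c0]
  · rw [Matrix.updateCol_ne c0_ne_c1.symm, Wmat_c1, Wmat_c1]
lemma Wmat_update_c1 (σ : Matrix (Fin (d+2)) (Fin d) A) (u v w : Fin (d+2) → A) :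
    (Wmat σ u v).updateCol c1 w = Wmat σ u w := by
  ext i j; revert j; refine fcases _ ?_ ?_ ?_
  · intro j; rw [Matrix.updateCol_ne (castAdd_ne_c1 j), Wmat_castAdd, Wmat_castAdd]
  · rw [Matrix.updateCol_ne c0_ne_c1, Wmat_c0, Wmat_c0]
  · rw [Matrix.updateCol_self, Wmat_c1]

lemma Wd_self (σ : Matrix (Fin (d+2)) (Fin d) A) (u) : Wd σ u u = 0 :=
  Matrix.det_zero_of_column_eq c0_ne_c1 (fun i => by rw [Wmat_c0, Wmat_c1])
lemma Wd_add_left (σ : Matrix (Fin (d+2)) (Fin d) A) (u u' v) :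
    Wd σ (u+u') v = Wd σ u v + Wd σ u' v := by
  unfold Wd
  rw [← Wmat_update_c0 σ 0 v, Matrix.det_updateCol_add, Wmat_update_c0, Wmat_update_c0]
lemma Wd_add_right (σ : Matrix (Fin (d+2)) (Fin d) A) (u v v') :
    Wd σ u (v+v') = Wd σ u v + Wd σ u v' := by
  unfold Wd
  rw [← Wmat_update_c1 σ u 0, Matrix.det_updateCol_add, Wmat_update_c1, Wmat_update_c1]
lemma Wd_swap (σ : Matrix (Fin (d+2)) (Fin d) A) (u v) : Wd σ u v = - Wd σ v u := by
  have := Wd_self σ (u+v)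
  rw [Wd_add_left, Wd_add_right, Wd_add_right, Wd_self, Wd_self] at this
  linear_combination this
lemma W_self (σ : Matrix (Fin (d+2)) (Fin d) A) (a) : W σ a a = 0 := Wd_self _ _
lemma W_swap (σ : Matrix (Fin (d+2)) (Fin d) A) (a b) : W σ a b = - W σ b a := Wd_swap _ _ _

lemma Wd_eq_sum (σ : Matrix (Fin (d+2)) (Fin d) A) (u v) :
    Wd σ u v = ∑ t, v t * Wd σ u (Pi.single t 1) := by
  have h : ∀ w, Wd σ u w = Matrix.cramer (Wmat σ u 0) w c1 := by
    intro w; rw [Matrix.cramer_apply, Wmat_update_c1]; rfl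
  simp only [h]
  conv_lhs => rw [pi_eq_sum_univ' v]
  rw [map_sum, Finset.sum_apply]
  refine Finset.sum_congr rfl fun t _ => ?_
  rw [map_smul, Pi.smul_apply, smul_eq_mul]

lemma adj_col (M : Matrix (Fin (d+2)) (Fin (d+2)) A) (j a) :
    M.adjugate j a = (M.updateCol j (Pi.single a 1)).det := by
  have : M.adjugate j a = (M.adjugate).transpose a j := rfl
  rw [this, Matrix.adjugate_transpose, Matrix.adjugate_apply, Matrix.updateRow_transpose,
    Matrix.det_transpose]

/-- adjugate formula, left. -/
lemma W_cramer_left (σ : Matrix (Fin (d+2)) (Fin d) A) (b c a : Fin (d+2)) (x : Fin (d+2) → A) :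
    W σ b c * x a = (∑ j, (∑ t, x t * σ t j) *
        (Wmat σ (Pi.single b 1) (Pi.single c 1)).adjugate (Fin.castAdd 2 j) a)
      + x b * W σ a c + x c * W σ b a := by
  set M := Wmat σ (Pi.single b (1:A)) (Pi.single c 1) with hM
  have h : Matrix.vecMul (Matrix.vecMul x M) M.adjugate = M.det • x := by
    rw [Matrix.vecMul_vecMul, Matrix.mul_adjugate, Matrix.vecMul_smul, Matrix.vecMul_one]
  have h' := congrFun h a
  simp only [Pi.smul_apply, smul_eq_mul, Matrix.vecMul, dotProduct] at h'
  rw [sum_split] at h'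
  change _ = W σ b c * x a at h'
  rw [← h']
  congr 1
  congr 1
  · refine Finset.sum_congr rfl fun j _ => ?_
    simp [hM, Wmat_castAdd]
  · rw [adj_col, hM, Wmat_update_c0]
    simp [Wmat_c0, W, Wd, Pi.single_apply]
  · rw [adj_col, hM, Wmat_update_c1]
    simp [Wmat_c1, W, Wd, Pi.single_apply]

/-- adjugate formula, right. -/
lemma W_cramer_right (σ : Matrix (Fin (d+2)) (Fin d) A) (b c : Fin (d+2)) (v : Fin (d+2) → A) (i) :
    W σ b c * v i = (∑ j, σ i j *
        (∑ t, (Wmat σ (Pi.single b 1) (Pi.single c 1)).adjugate (Fin.castAdd 2 j) t * v t))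
      + (Pi.single b 1 : Fin (d+2) → A) i * (∑ t, W σ t c * v t)
      + (Pi.single c 1 : Fin (d+2) → A) i * (∑ t, W σ b t * v t) := by
  set M := Wmat σ (Pi.single b (1:A)) (Pi.single c 1) with hM
  have h : M.mulVec (M.adjugate.mulVec v) = M.det • v := by
    rw [Matrix.mulVec_mulVec, Matrix.mul_adjugate, Matrix.smul_mulVec, Matrix.one_mulVec]
  have h' := congrFun h i
  simp only [Pi.smul_apply, smul_eq_mul, Matrix.mulVec, dotProduct] at h'
  rw [sum_split] at h'
  change _ = W σ b c * v i at h'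
  rw [← h']
  congr 1
  congr 1
  · refine Finset.sum_congr rfl fun j _ => ?_
    simp [hM, Wmat_castAdd]
  · simp only [adj_col, hM, Wmat_update_c0, Wmat_c0]; rfl
  · simp only [adj_col, hM, Wmat_update_c1, Wmat_c1]; rfl

/-- `W_bc b_j` is a combination of the entries of `σ b` -/
lemma W_cramer_inj (σ : Matrix (Fin (d+2)) (Fin d) A) (b c : Fin (d+2)) (v : Fin d → A) (j) :
    W σ b c * v j = ∑ t, (Wmat σ (Pi.single b 1) (Pi.single c 1)).adjugate (Fin.castAdd 2 j) t
      * (∑ i, σ t i * v i) := by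
  set M := Wmat σ (Pi.single b (1:A)) (Pi.single c 1) with hM
  let v' : Fin (d+2) → A := Fin.append v ![0,0]
  have h : M.adjugate.mulVec (M.mulVec v') = M.det • v' := by
    rw [Matrix.mulVec_mulVec, Matrix.adjugate_mul, Matrix.smul_mulVec, Matrix.one_mulVec]
  have h' := congrFun h (Fin.castAdd 2 j)
  simp only [Pi.smul_apply, smul_eq_mul, Matrix.mulVec, dotProduct] at h'
  have e1 : ∀ j, v' (Fin.castAdd 2 j) = v j := fun j => by simp [v']
  have e2 : v' c0 = 0 := by simp only [v', c0, Fin.append_right]; rfl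
  have e3 : v' c1 = 0 := by simp only [v', c1, Fin.append_right]; rfl
  rw [e1] at h'
  change _ = W σ b c * v j at h'
  rw [← h']
  refine Finset.sum_congr rfl fun t _ => ?_
  rw [sum_split, e2, e3]
  simp only [e1, mul_zero, add_zero, hM, Wmat_castAdd]

lemma W3 (σ : Matrix (Fin (d+2)) (Fin d) A) (r j) : ∑ t, σ t j * W σ r t = 0 := by
  unfold W
  rw [← Wd_eq_sum σ (Pi.single r 1) (fun t => σ t j)]
  exact Matrix.det_zero_of_column_eq (castAdd_ne_c1 j) (fun i => by rw [Wmat_castAdd, Wmat_c1])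

lemma W_pl (σ : Matrix (Fin (d+2)) (Fin d) A) (q a b c) :
    W σ q a * W σ b c + W σ q b * W σ c a + W σ q c * W σ a b = 0 := by
  have := W_cramer_left σ b c a (fun t => W σ q t)
  simp only [mul_comm (W σ q _) (σ _ _), W3, zero_mul, Finset.sum_const_zero] at this
  rw [W_swap σ c a, W_swap σ a b]
  linear_combination this


lemma minor_mem (σ : Matrix (Fin (d+2)) (Fin d) A) (f : Fin d → Fin (d+2)) (g : Fin d → Fin d) :
    (σ.submatrix f g).det ∈ Ideal.span (Set.range fun p : Fin (d+2) × Fin (d+2) => W σ p.1 p.2) := by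
  by_cases hf : Function.Injective f
  swap
  · simp only [Function.Injective, not_forall] at hf
    obtain ⟨i, j, h, hij⟩ := hf
    rw [Matrix.det_zero_of_row_eq hij (by ext l; simp [h])]; exact zero_mem _
  by_cases hg : Function.Injective g
  swap
  · simp only [Function.Injective, not_forall] at hg
    obtain ⟨i, j, h, hij⟩ := hg
    rw [Matrix.det_zero_of_column_eq hij (by intro l; simp [h])]; exact zero_mem _
  have hcard : (Finset.univ.image f)ᶜ.card = 2 := by
    rw [Finset.card_compl, Finset.card_image_of_injective _ hf]; simp
  obtain ⟨a, b, hab, hc⟩ := Finset.card_eq_two.1 hcard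
  have ha : ∀ j, f j ≠ a := by
    intro j h
    have : a ∈ (Finset.univ.image f)ᶜ := by rw [hc]; simp
    simp [← h] at this
  have hb : ∀ j, f j ≠ b := by
    intro j h
    have : b ∈ (Finset.univ.image f)ᶜ := by rw [hc]; simp
    simp [← h] at this
  let h : Fin (d+2) → Fin (d+2) := Fin.append f ![a, b]
  have h1 : ∀ j, h (Fin.castAdd 2 j) = f j := fun j => by simp [h]
  have h2 : h c0 = a := by simp only [h, c0, Fin.append_right]; rfl
  have h3 : h c1 = b := by simp only [h, c1, Fin.append_right]; rfl
  have hinj : Function.Injective h := by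
    intro x; revert x
    refine fcases _ ?_ ?_ ?_
    · intro i y; revert y
      refine fcases _ ?_ ?_ ?_
      · intro j hh; rw [h1, h1] at hh; rw [hf hh]
      · intro hh; rw [h1, h2] at hh; exact absurd hh (ha _)
      · intro hh; rw [h1, h3] at hh; exact absurd hh (hb _)
    · intro y; revert y
      refine fcases _ ?_ ?_ ?_
      · intro j hh; rw [h1, h2] at hh; exact absurd hh.symm (ha _)
      · intro hh; rfl
      · intro hh; rw [h2, h3] at hh; exact absurd hh hab
    · intro y; revert y
      refine fcases _ ?_ ?_ ?_
      · intro j hh; rw [h1, h3] at hh; exact absurd hh.symm (hb _)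
      · intro hh; rw [h2, h3] at hh; exact absurd hh.symm hab
      · intro hh; rfl
  let e : Equiv.Perm (Fin (d+2)) := Equiv.ofBijective h (Finite.injective_iff_bijective.1 hinj)
  let eg : Equiv.Perm (Fin d) := Equiv.ofBijective g (Finite.injective_iff_bijective.1 hg)
  have hdet : (σ.submatrix f id).det = (Equiv.Perm.sign e : ℤ) • W σ a b := by
    have hp := Matrix.det_permute e (Wmat σ (Pi.single a (1:A)) (Pi.single b 1))
    rw [zsmul_eq_mul]
    refine Eq.trans ?_ hp
    rw [← Matrix.det_submatrix_equiv_self finSumFinEquiv]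
    have : (((Wmat σ (Pi.single a (1:A)) (Pi.single b 1)).submatrix e id).submatrix
        finSumFinEquiv finSumFinEquiv : Matrix (Fin d ⊕ Fin 2) (Fin d ⊕ Fin 2) A) =
        Matrix.fromBlocks (σ.submatrix f id) 0 (Matrix.of fun i j => σ (![a,b] i) j) 1 := by
      have q0 : ∀ i, e i = h i := fun _ => rfl
      have q1 : (Fin.natAdd d (0 : Fin 2)) = c0 := rfl
      have q2 : (Fin.natAdd d (1 : Fin 2)) = c1 := rfl
      ext (i | i) (j | j)
      · simp [q0, h1, Wmat_castAdd]
      · fin_cases j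
        · simp [q0, h1, q1, Wmat_c0, ha]
        · simp [q0, h1, q2, Wmat_c1, hb]
      · fin_cases i
        · simp [q0, q1, h2, Wmat_castAdd]
        · simp [q0, q2, h3, Wmat_castAdd]
      · fin_cases i <;> fin_cases j <;>
        simp [q0, q1, q2, h2, h3, Wmat_c0, Wmat_c1, hab, hab.symm]
    rw [this, Matrix.det_fromBlocks_zero₁₂, Matrix.det_one, mul_one]
  have : (σ.submatrix f g).det = (Equiv.Perm.sign eg : ℤ) • (σ.submatrix f id).det := by
    rw [zsmul_eq_mul, ← Matrix.det_permute' eg]; rfl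
  rw [this, hdet]
  have hmem : W σ a b ∈ Ideal.span (Set.range fun p : Fin (d+2) × Fin (d+2) => W σ p.1 p.2) :=
    Ideal.subset_span ⟨(a,b), rfl⟩
  exact zsmul_mem (zsmul_mem hmem _) _

end Wpart

section TF
variable {A : Type} [CommRing A] [IsDomain A] [UniqueFactorizationMonoid A] {d : ℕ}

lemma TF (σ : Matrix (Fin (d+2)) (Fin d) A) (hW : ∀ π : A, Prime π → ∃ r s, ¬ π ∣ W σ r s)
    (q : A) : q ≠ 0 → ∀ (c : Fin (d+2) → A) (b : Fin d → A),
    (∀ t, q * c t = ∑ j, σ t j * b j) → ∃ b' : Fin d → A, ∀ t, c t = ∑ j, σ t j * b' j := by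
  induction q using UniqueFactorizationMonoid.induction_on_prime with
  | h₁ => simp
  | h₂ x hx =>
    intro _ c b h
    obtain ⟨u, rfl⟩ := hx
    refine ⟨fun j => (u⁻¹ : Aˣ) * b j, fun t => ?_⟩
    have : c t = (u⁻¹ : Aˣ) * (u * c t) := by simp
    rw [this, h, Finset.mul_sum]
    exact Finset.sum_congr rfl fun _ _ => by ring
  | h₃ a p ha hp ih =>
    intro _ c b h
    obtain ⟨r, s, hrs⟩ := hW p hp
    have hb : ∀ j, p ∣ b j := by
      intro j
      have := W_cramer_inj σ r s b j
      refine (hp.dvd_or_dvd (a := W σ r s) ?_).resolve_left hrs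
      rw [this]
      refine Finset.dvd_sum fun t _ => ?_
      rw [← h]
      exact ((Dvd.intro _ rfl : p ∣ p * (a * c t)).trans (by rw [mul_assoc])).mul_left _
    choose b' hb' using hb
    refine ih ha c b' fun t => ?_
    apply mul_left_cancel₀ hp.ne_zero
    rw [← mul_assoc, h, Finset.mul_sum]
    exact Finset.sum_congr rfl fun j _ => by rw [hb']; ring

lemma W_exists_ne (σ : Matrix (Fin (d+2)) (Fin d) A) (hW : ∀ π : A, Prime π → ∃ r s, ¬ π ∣ W σ r s)
    (h0 : ∃ x : A, Prime x) : ∃ r s, W σ r s ≠ 0 := by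
  obtain ⟨x, hx⟩ := h0
  obtain ⟨r, s, h⟩ := hW x hx
  exact ⟨r, s, fun h' => h (h' ▸ dvd_zero _)⟩

lemma kerW (σ : Matrix (Fin (d+2)) (Fin d) A) (hW : ∀ π : A, Prime π → ∃ r s, ¬ π ∣ W σ r s)
    (h0 : ∃ x : A, Prime x) (c : Fin (d+2) → A) (hc : ∀ t, ∑ r, c r * W σ r t = 0) :
    ∃ b : Fin d → A, ∀ t, c t = ∑ j, σ t j * b j := by
  obtain ⟨r, s, h⟩ := W_exists_ne σ hW h0
  refine TF σ hW _ h c (fun j => (∑ t, (Wmat σ (Pi.single r 1) (Pi.single s 1)).adjugate (Fin.castAdd 2 j) t * c t)) fun t => ?_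
  rw [W_cramer_right]
  have e1 : ∀ s, ∑ t, W σ t s * c t = 0 := fun s => by
    rw [← hc s]; exact Finset.sum_congr rfl fun _ _ => mul_comm _ _
  have e2 : ∀ s, ∑ t, W σ s t * c t = 0 := fun s => by
    simp_rw [W_swap σ s, neg_mul, Finset.sum_neg_distrib, e1, neg_zero]
  rw [e1, e2]; simp

end TF

lemma dvd_of_dvd_mul_all {A ι : Type} [CommRing A] [IsDomain A] [UniqueFactorizationMonoid A]
    (s : ι → A) (hs : ∀ π : A, Prime π → ∃ j, ¬ π ∣ s j) (q : A) :
    q ≠ 0 → ∀ v, (∀ j, q ∣ v * s j) → q ∣ v := by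
  induction q using UniqueFactorizationMonoid.induction_on_prime with
  | h₁ => simp
  | h₂ x hx => intro _ v _; exact hx.dvd
  | h₃ a p ha hp ih =>
    intro _ v h
    obtain ⟨j, hj⟩ := hs p hp
    have : p ∣ v := (hp.dvd_or_dvd ((Dvd.intro _ rfl).trans (h j))).resolve_right hj
    obtain ⟨w, rfl⟩ := this
    refine mul_dvd_mul_left p (ih ha w fun j => ?_)
    have := h j
    rw [mul_assoc] at this
    exact (mul_dvd_mul_iff_left hp.ne_zero).1 this


end part1

section part2

section ident
variable {Q : Type} [CommRing Q] {m : ℕ}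

lemma xD0 (x : Fin m → Q) (w : Fin m → Fin m → Q) (cf cg : Fin m → Fin m → Q)
    (h2 : ∀ a b c, x a * w b c + x b * w c a + x c * w a b = 0)
    (hf : ∑ i, ∑ j, cf i j * (x i * x j) = 0) (hg : ∑ i, ∑ j, cg i j * (x i * x j) = 0) (t : Fin m) :
    x t * (∑ i, ∑ j, ∑ k, ∑ l, cf i j * cg k l * (x j * x l * w k i)) = 0 := by
  have : ∀ i j k l, x t * (cf i j * cg k l * (x j * x l * w k i)) =
      - ((cf i j * x j * w i t) * (cg k l * (x k * x l)))
      - ((cf i j * (x i * x j)) * (cg k l * x l * w t k)) := by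
    intro i j k l
    linear_combination cf i j * cg k l * x j * x l * h2 t k i
  simp_rw [Finset.mul_sum, this, Finset.sum_sub_distrib, Finset.sum_neg_distrib, ← Finset.mul_sum, hg,
    ← Finset.sum_mul, hf]
  simp

lemma xa (x : Fin m → Q) (w : Fin m → Fin m → Q) (cf cg : Fin m → Fin m → Q)
    (h2 : ∀ a b c, x a * w b c + x b * w c a + x c * w a b = 0)
    (hsw : ∀ a b, w a b = - w b a)
    (hf : ∑ i, ∑ j, cf i j * (x i * x j) = 0) (hg : ∑ i, ∑ j, cg i j * (x i * x j) = 0) (r t : Fin m) :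
    x t * (∑ i, ∑ j, ∑ k, ∑ l, cf i j * cg k l * (w r j * x l * w k i + w r k * x i * w l j)) =
      w r t * (∑ i, ∑ j, ∑ k, ∑ l, cf i j * cg k l * (x j * x l * w k i)) := by
  have : ∀ i j k l, x t * (cf i j * cg k l * (w r j * x l * w k i + w r k * x i * w l j)) =
      w r t * (cf i j * cg k l * (x j * x l * w k i))
      + ((cf i j * w r i * w t j) * (cg k l * (x k * x l)))
      - ((cf i j * (x i * x j)) * (cg k l * w r k * w t l)) := by
    intro i j k l
    have a1 := h2 t r j
    have a2 := h2 r k i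
    have a3 := h2 t l j
    rw [hsw j t, hsw t r] at a1
    rw [hsw i r] at a2
    rw [hsw j t] at a3
    linear_combination cf i j * cg k l * (x l * w k i * a1 + x l * w t j * a2 + w r k * x i * a3)
  simp_rw [Finset.mul_sum, this, Finset.sum_sub_distrib, Finset.sum_add_distrib, ← Finset.mul_sum, hg,
    ← Finset.sum_mul, hf]
  simp
end ident

section UFD
variable {P : Type} [CommRing P] [IsDomain P] [UniqueFactorizationMonoid P]

lemma dvd_pow_of_primes (Δ c : P) : c ≠ 0 → (∀ h, Prime h → h ∣ c → h ∣ Δ) → ∃ N, c ∣ Δ ^ N := by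
  induction c using UniqueFactorizationMonoid.induction_on_prime with
  | h₁ => simp
  | h₂ x hx => intro _ _; exact ⟨0, hx.dvd⟩
  | h₃ a p ha hp ih =>
    intro _ h
    obtain ⟨N, hN⟩ := ih ha fun q hq hqa => h q hq (hqa.mul_left _)
    refine ⟨N+1, ?_⟩
    rw [pow_succ']
    exact mul_dvd_mul (h p hp (Dvd.intro _ rfl)) hN

lemma ufd_key (Δ F G : P) (hne : F ≠ 0 ∨ G ≠ 0) (hK : ∀ h, Prime h → h ∣ F → h ∣ G → h ∣ Δ)
    (α β : P) (h : α * F = β * G) : ∃ M κ, Δ ^ M * α = κ * G ∧ Δ ^ M * β = κ * F := by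
  have main : ∃ F' G' c, c ≠ 0 ∧ IsRelPrime F' G' ∧ c * F' = F ∧ c * G' = G := by
    rcases hne with hF | hG
    · obtain ⟨a, b, c, h1, h2, h3⟩ := UniqueFactorizationMonoid.exists_reduced_factors F hF G
      exact ⟨a, b, c, fun hc => hF (by rw [← h2, hc, zero_mul]), h1, h2, h3⟩
    · obtain ⟨a, b, c, h1, h2, h3⟩ := UniqueFactorizationMonoid.exists_reduced_factors G hG F
      exact ⟨b, a, c, fun hc => hG (by rw [← h2, hc, zero_mul]), h1.symm, h3, h2⟩
  obtain ⟨F', G', c, hc, hrel, rfl, rfl⟩ := main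
  obtain ⟨M, q, hq⟩ := dvd_pow_of_primes Δ c hc fun h hp hd => hK h hp (hd.mul_right _) (hd.mul_right _)
  have h' : α * F' = β * G' := mul_left_cancel₀ hc (by linear_combination h)
  have hd : G' ∣ α := by
    refine hrel.symm.dvd_of_dvd_mul_right ?_
    exact ⟨β, by rw [h', mul_comm]⟩
  obtain ⟨e, rfl⟩ := hd
  have hβ : β = e * F' ∨ G' = 0 := by
    by_cases hG : G' = 0
    · exact Or.inr hG
    · left; exact mul_right_cancel₀ hG (by linear_combination -h')
  rcases hβ with rfl | rfl
  · exact ⟨M, q * e, by rw [hq]; ring, by rw [hq]; ring⟩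
  · have hu : IsUnit F' := hrel dvd_rfl (dvd_zero _)
    obtain ⟨u, rfl⟩ := hu
    exact ⟨M, q * β * (u⁻¹ : Pˣ), by ring, by
      rw [hq]; linear_combination (-q*c*β) * u.inv_mul⟩
end UFD

end part2

section part3

section Pside
lemma hc_mul {A ι : Type} [CommRing A] (p F : MvPolynomial ι A) {m : ℕ} (hF : F.IsHomogeneous m)
    (n : ℕ) : homogeneousComponent n (p * F) =
      if m ≤ n then homogeneousComponent (n - m) p * F else 0 := by
  conv_lhs => rw [← sum_homogeneousComponent p, Finset.sum_mul, map_sum]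
  have : ∀ i, homogeneousComponent n (homogeneousComponent i p * F) =
      if n = i + m then homogeneousComponent i p * F else 0 := fun i =>
    homogeneousComponent_of_mem ((homogeneousComponent_isHomogeneous i p).mul hF)
  simp_rw [this]
  split_ifs with h
  · obtain ⟨q, rfl⟩ := Nat.exists_eq_add_of_le' h
    simp only [add_left_inj, Nat.add_sub_cancel]
    rw [Finset.sum_ite_eq]
    split_ifs with h2
    · rfl
    · rw [homogeneousComponent_eq_zero, zero_mul]; simpa using h2
  · refine Finset.sum_eq_zero fun i _ => if_neg (by omega)

variable {A : Type} [CommRing A] [IsDomain A] [UniqueFactorizationMonoid A]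

abbrev PP (A : Type) [CommRing A] := MvPolynomial (Fin 2) A

lemma const_decomp (κ : PP A) : ∃ a b : PP A, κ = C (coeff 0 κ) + a * X 0 + b * X 1 := by
  induction κ using MvPolynomial.induction_on with
  | C a => exact ⟨0, 0, by simp⟩
  | add p q hp hq =>
    obtain ⟨a, b, h⟩ := hp
    obtain ⟨a', b', h'⟩ := hq
    refine ⟨a + a', b + b', ?_⟩
    rw [coeff_add, C_add]; linear_combination h + h'
  | mul_X p i hp =>
    have : coeff 0 (p * X i) = 0 := by
      rw [← constantCoeff_eq, map_mul, constantCoeff_X, mul_zero]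
    rw [this]
    fin_cases i
    · exact ⟨p, 0, by simp⟩
    · exact ⟨0, p, by simp⟩

lemma uv_coprime (a b : PP A) (h : X 1 * a = X 0 * b) : ∃ c, a = X 0 * c ∧ b = X 1 * c := by
  have hp : Prime (X 0 : PP A) := X_prime
  have : (X 0 : PP A) ∣ a := by
    refine (hp.dvd_or_dvd (a := X 1) ⟨b, h⟩).resolve_left ?_
    rw [X_dvd_X]; simp
  obtain ⟨c, rfl⟩ := this
  refine ⟨c, rfl, mul_left_cancel₀ hp.ne_zero ?_⟩
  linear_combination -h

def InJ (Δ F G h : PP A) : Prop := ∃ M, Δ ^ M * h ∈ Ideal.span {F, G}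

lemma InJ.add {Δ F G h h' : PP A} : InJ Δ F G h → InJ Δ F G h' → InJ Δ F G (h + h') := by
  rintro ⟨M, a⟩ ⟨N, b⟩
  refine ⟨M + N, ?_⟩
  have : Δ ^ (M+N) * (h + h') = Δ ^ N * (Δ ^ M * h) + Δ ^ M * (Δ ^ N * h') := by ring
  rw [this]
  exact add_mem (Ideal.mul_mem_left _ _ a) (Ideal.mul_mem_left _ _ b)
lemma InJ.mul {Δ F G h : PP A} (q : PP A) : InJ Δ F G h → InJ Δ F G (q * h) := by
  rintro ⟨M, a⟩
  exact ⟨M, by rw [mul_left_comm]; exact Ideal.mul_mem_left _ _ a⟩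
lemma InJ.cancel {Δ F G h : PP A} (N : ℕ) : InJ Δ F G (Δ ^ N * h) → InJ Δ F G h := by
  rintro ⟨M, a⟩
  exact ⟨M + N, by rw [pow_add, mul_assoc]; exact a⟩

lemma wiebe (Δ F G F1 F2 G1 G2 : PP A) (hF : F = X 0 * F1 + X 1 * F2)
    (hG : G = X 0 * G1 + X 1 * G2) (hne : F ≠ 0 ∨ G ≠ 0)
    (hK : ∀ h, Prime h → h ∣ F → h ∣ G → h ∣ Δ) (h : PP A)
    (hu : InJ Δ F G (X 0 * h)) (hv : InJ Δ F G (X 1 * h)) :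
    ∃ M κ l m, Δ ^ M * h = κ * (F1 * G2 - F2 * G1) + l * F + m * G := by
  obtain ⟨M1, hM1⟩ := hu
  obtain ⟨M2, hM2⟩ := hv
  obtain ⟨α, β, h1⟩ := Ideal.mem_span_pair.1 hM1
  obtain ⟨γ, δ, h2⟩ := Ideal.mem_span_pair.1 hM2
  obtain ⟨N, κ, e1, e2⟩ := ufd_key Δ F G hne hK (Δ^M2 * X 1 * α - Δ^M1 * X 0 * γ)
    (Δ^M1 * X 0 * δ - Δ^M2 * X 1 * β)
    (by linear_combination Δ^M2 * X 1 * h1 - Δ^M1 * X 0 * h2)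
  obtain ⟨l, a1, a2⟩ := uv_coprime (Δ^N * Δ^M2 * α - κ * G2) (Δ^N * Δ^M1 * γ + κ * G1)
    (by rw [hG] at e1; linear_combination e1)
  obtain ⟨m, b1, b2⟩ := uv_coprime (Δ^N * Δ^M2 * β + κ * F2) (Δ^N * Δ^M1 * δ - κ * F1)
    (by rw [hF] at e2; linear_combination -e2)
  refine ⟨M1 + M2 + N, κ, l, m, ?_⟩
  have hp : Prime (X 0 : PP A) := X_prime
  apply mul_left_cancel₀ hp.ne_zero
  have : X 0 * (Δ ^ (M1 + M2 + N) * h) = Δ^N * Δ^M2 * (α * F + β * G) := by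
    rw [h1]; ring
  rw [this]
  have e3 : Δ^N * Δ^M2 * α = X 0 * l + κ * G2 := by linear_combination a1
  have e4 : Δ^N * Δ^M2 * β = X 0 * m - κ * F2 := by linear_combination b1
  calc _ = (Δ^N * Δ^M2 * α) * F + (Δ^N * Δ^M2 * β) * G := by ring
    _ = _ := by rw [e3, e4, hF, hG]; ring

lemma uD_mem (F G F1 F2 G1 G2 : PP A) (hF : F = X 0 * F1 + X 1 * F2)
    (hG : G = X 0 * G1 + X 1 * G2) :
    X 0 * (F1 * G2 - F2 * G1) ∈ Ideal.span {F, G} ∧ X 1 * (F1 * G2 - F2 * G1) ∈ Ideal.span {F, G} := by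
  constructor
  · exact Ideal.mem_span_pair.2 ⟨G2, -F2, by rw [hF, hG]; ring⟩
  · exact Ideal.mem_span_pair.2 ⟨-G1, F1, by rw [hF, hG]; ring⟩

/-- extract degree two component -/
lemma hc2 {κ l m D F G : PP A} (hD : D.IsHomogeneous 2) (hF : F.IsHomogeneous 2)
    (hG : G.IsHomogeneous 2) : homogeneousComponent 2 (κ * D + l * F + m * G) =
      C (coeff 0 κ) * D + C (coeff 0 l) * F + C (coeff 0 m) * G := by
  rw [map_add, map_add, hc_mul _ _ hD, hc_mul _ _ hF, hc_mul _ _ hG]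
  simp
lemma hc1 {κ l m D F G : PP A} (hD : D.IsHomogeneous 2) (hF : F.IsHomogeneous 2)
    (hG : G.IsHomogeneous 2) : homogeneousComponent 1 (κ * D + l * F + m * G) = 0 := by
  rw [map_add, map_add, hc_mul _ _ hD, hc_mul _ _ hF, hc_mul _ _ hG]
  simp

lemma hc_Cpow (δ : A) (M n : ℕ) (h : PP A) :
    homogeneousComponent n ((C δ : PP A) ^ M * h) = C δ ^ M * homogeneousComponent n h := by
  rw [← C_pow, homogeneousComponent_C_mul]

variable (δ : A) (F G F1 F2 G1 G2 : PP A)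

lemma desc (hF : F = X 0 * F1 + X 1 * F2)
    (hG : G = X 0 * G1 + X 1 * G2) (hne : F ≠ 0 ∨ G ≠ 0)
    (hK : ∀ h, Prime h → h ∣ F → h ∣ G → h ∣ C δ)
    (hFh : F.IsHomogeneous 2) (hGh : G.IsHomogeneous 2) (hDh : (F1 * G2 - F2 * G1).IsHomogeneous 2)
    (h : PP A) (h2 : homogeneousComponent 2 h = 0)
    (hu : InJ (C δ) F G (X 0 * h)) (hv : InJ (C δ) F G (X 1 * h)) : InJ (C δ) F G h := by
  obtain ⟨M, κ, l, m, e⟩ := wiebe (C δ) F G F1 F2 G1 G2 hF hG hne hK h hu hv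
  refine ⟨M, ?_⟩
  have e2 := congrArg (homogeneousComponent 2) e
  rw [hc2 hDh hFh hGh, hc_Cpow, h2, mul_zero] at e2
  obtain ⟨a, b, hab⟩ := const_decomp κ
  obtain ⟨u1, u2⟩ := uD_mem F G F1 F2 G1 G2 hF hG
  have : C δ ^ M * h = a * (X 0 * (F1 * G2 - F2 * G1)) + b * (X 1 * (F1 * G2 - F2 * G1)) +
     ((l - C (coeff 0 l)) * F + (m - C (coeff 0 m)) * G) := by
    rw [e]; linear_combination (F1 * G2 - F2 * G1) * hab - e2
  rw [this]
  exact add_mem (add_mem (Ideal.mul_mem_left _ _ u1) (Ideal.mul_mem_left _ _ u2))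
    (Ideal.mem_span_pair.2 ⟨_, _, rfl⟩)

lemma deg1_zero (hδ : δ ≠ 0) (hF : F = X 0 * F1 + X 1 * F2)
    (hG : G = X 0 * G1 + X 1 * G2) (hne : F ≠ 0 ∨ G ≠ 0)
    (hK : ∀ h, Prime h → h ∣ F → h ∣ G → h ∣ C δ)
    (hFh : F.IsHomogeneous 2) (hGh : G.IsHomogeneous 2) (hDh : (F1 * G2 - F2 * G1).IsHomogeneous 2)
    (h : PP A) (h1 : h.IsHomogeneous 1)
    (hu : InJ (C δ) F G (X 0 * h)) (hv : InJ (C δ) F G (X 1 * h)) : h = 0 := by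
  obtain ⟨M, κ, l, m, e⟩ := wiebe (C δ) F G F1 F2 G1 G2 hF hG hne hK h hu hv
  have e2 := congrArg (homogeneousComponent 1) e
  rw [hc1 hDh hFh hGh, hc_Cpow, homogeneousComponent_eq_self h1] at e2
  exact (mul_eq_zero.1 e2).resolve_left (pow_ne_zero _ (by simpa using hδ))

lemma deg2_eq (hF : F = X 0 * F1 + X 1 * F2)
    (hG : G = X 0 * G1 + X 1 * G2) (hne : F ≠ 0 ∨ G ≠ 0)
    (hK : ∀ h, Prime h → h ∣ F → h ∣ G → h ∣ C δ)
    (hFh : F.IsHomogeneous 2) (hGh : G.IsHomogeneous 2) (hDh : (F1 * G2 - F2 * G1).IsHomogeneous 2)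
    (h : PP A) (h1 : h.IsHomogeneous 2)
    (hu : InJ (C δ) F G (X 0 * h)) (hv : InJ (C δ) F G (X 1 * h)) :
    ∃ (M : ℕ) (c c1 c2 : A), C δ ^ M * h = C c * (F1 * G2 - F2 * G1) + C c1 * F + C c2 * G := by
  obtain ⟨M, κ, l, m, e⟩ := wiebe (C δ) F G F1 F2 G1 G2 hF hG hne hK h hu hv
  have e2 := congrArg (homogeneousComponent 2) e
  rw [hc2 hDh hFh hGh, hc_Cpow, homogeneousComponent_eq_self h1] at e2
  exact ⟨M, _, _, _, e2⟩

lemma deg_lt_zero (κ F p : PP A) (hFh : F.IsHomogeneous 2) (hp : p.IsHomogeneous 1)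
    (M : ℕ) (hδ : δ ≠ 0) (h : C δ ^ M * p = κ * F) : p = 0 := by
  have e2 := congrArg (homogeneousComponent 1) h
  rw [hc_mul _ _ hFh, hc_Cpow, homogeneousComponent_eq_self hp] at e2
  simpa [hδ] using e2

lemma D_free (hδ : δ ≠ 0) (hF : F = X 0 * F1 + X 1 * F2)
    (hG : G = X 0 * G1 + X 1 * G2) (hne : F ≠ 0 ∨ G ≠ 0)
    (hK : ∀ h, Prime h → h ∣ F → h ∣ G → h ∣ C δ)
    (hFh : F.IsHomogeneous 2) (hGh : G.IsHomogeneous 2) (hDh : (F1 * G2 - F2 * G1).IsHomogeneous 2)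
    (hF1 : F1.IsHomogeneous 1) (hF2 : F2.IsHomogeneous 1)
    (hG1 : G1.IsHomogeneous 1) (hG2 : G2.IsHomogeneous 1)
    (t : A) (ht : C t * (F1 * G2 - F2 * G1) ∈ Ideal.span {F, G}) : t = 0 := by
  obtain ⟨l, m, e⟩ := Ideal.mem_span_pair.1 ht
  have e2 := congrArg (homogeneousComponent 2) e
  rw [map_add, hc_mul _ _ hFh, hc_mul _ _ hGh, homogeneousComponent_C_mul,
    homogeneousComponent_eq_self hDh] at e2
  simp only [le_refl, if_true, Nat.sub_self, homogeneousComponent_zero] at e2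
  generalize coeff 0 l = c at e2
  generalize coeff 0 m = c' at e2
  have hX : ∀ (i : Fin 2) (a : A), (X i * C a : PP A).IsHomogeneous 1 := fun i a =>
    (isHomogeneous_X A i).mul (isHomogeneous_C _ a)
  have hC : ∀ (a : A) (p : PP A), p.IsHomogeneous 1 → (C a * p).IsHomogeneous 1 := fun a p hp => by
    simpa using (isHomogeneous_C (Fin 2) a).mul hp
  obtain ⟨M, κ, a1, a2⟩ := ufd_key (C δ) F G hne hK (X 0 * C c - C t * G2) (-(X 0 * C c' + C t * F2))
    (by linear_combination X 0 * e2 + C t * F2 * hG - C t * G2 * hF)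
  obtain ⟨N, κ', b1, b2⟩ := ufd_key (C δ) F G hne hK (X 1 * C c + C t * G1) (-(X 1 * C c' - C t * F1))
    (by linear_combination X 1 * e2 - C t * F1 * hG + C t * G1 * hF)
  have z1 := deg_lt_zero δ _ _ _ hGh ((hX 0 c).sub (hC t _ hG2)) M hδ a1
  have z2 := deg_lt_zero δ _ _ _ hFh ((hX 0 c').add (hC t _ hF2)).neg M hδ a2
  have z3 := deg_lt_zero δ _ _ _ hGh ((hX 1 c).add (hC t _ hG1)) N hδ b1
  have z4 := deg_lt_zero δ _ _ _ hFh ((hX 1 c').sub (hC t _ hF1)).neg N hδ b2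
  have hG0 : C t * G = 0 := by
    rw [hG]; linear_combination X 0 * z3 - X 1 * z1
  have hF0 : C t * F = 0 := by
    rw [hF]; linear_combination X 0 * z4 - X 1 * z2
  by_contra hne0
  have : (C t : PP A) ≠ 0 := by simpa using hne0
  rcases hne with h | h
  · exact h ((mul_eq_zero.1 hF0).resolve_left this)
  · exact h ((mul_eq_zero.1 hG0).resolve_left this)

lemma desc_pow (hF : F = X 0 * F1 + X 1 * F2)
    (hG : G = X 0 * G1 + X 1 * G2) (hne : F ≠ 0 ∨ G ≠ 0)
    (hK : ∀ h, Prime h → h ∣ F → h ∣ G → h ∣ C δ)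
    (hFh : F.IsHomogeneous 2) (hGh : G.IsHomogeneous 2) (hDh : (F1 * G2 - F2 * G1).IsHomogeneous 2)
    (h : PP A) (h1 : h.IsHomogeneous 1) (N : ℕ) :
    (∀ i j, i + j = N + 2 → InJ (C δ) F G (X 0 ^ i * X 1 ^ j * h)) →
    (∀ i j, i + j = 2 → InJ (C δ) F G (X 0 ^ i * X 1 ^ j * h)) := by
  induction N with
  | zero => intro H; exact H
  | succ N ih =>
    intro H
    apply ih
    intro i j hij
    apply desc δ F G F1 F2 G1 G2 hF hG hne hK hFh hGh hDh
    · have : (X 0 ^ i * X 1 ^ j * h : PP A).IsHomogeneous (1 * i + 1 * j + 1) :=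
        (((isHomogeneous_X A (0 : Fin 2)).pow i).mul ((isHomogeneous_X A (1 : Fin 2)).pow j)).mul h1
      rw [homogeneousComponent_of_mem this, if_neg (by omega)]
    · have := H (i+1) j (by omega)
      convert this using 1; ring
    · have := H i (j+1) (by omega)
      convert this using 1; ring
end Pside

end part3

section part4

section Bside
variable {A : Type} [CommRing A] {d : ℕ}

abbrev BB (A : Type) [CommRing A] (d : ℕ) := MvPolynomial (Fin (d+2)) A

def xi (σ : Matrix (Fin (d+2)) (Fin d) A) (r s t : Fin (d+2)) : PP A :=
  C (W σ r t) * X 0 + C (W σ s t) * X 1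
def rho (σ : Matrix (Fin (d+2)) (Fin d) A) (r s : Fin (d+2)) : BB A d →ₐ[A] PP A :=
  aeval (xi σ r s)
def tau (r s : Fin (d+2)) : PP A →ₐ[A] BB A d := aeval ![X s, -X r]
def quad (cf : Fin (d+2) → Fin (d+2) → A) : BB A d := ∑ i, ∑ j, C (cf i j) * (X i * X j)
def ell (σ : Matrix (Fin (d+2)) (Fin d) A) (j : Fin d) : BB A d := ∑ t, X t * C (σ t j)
def LL (σ : Matrix (Fin (d+2)) (Fin d) A) (cf cg : Fin (d+2) → Fin (d+2) → A) : Ideal (BB A d) :=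
  Ideal.span (Set.range (ell σ) ∪ {quad cf, quad cg})
def DD (σ : Matrix (Fin (d+2)) (Fin d) A) (cf cg : Fin (d+2) → Fin (d+2) → A) : BB A d :=
  ∑ i, ∑ j, ∑ k, ∑ l, C (cf i j) * C (cg k l) * (X j * X l * C (W σ k i))
def aa (σ : Matrix (Fin (d+2)) (Fin d) A) (cf cg : Fin (d+2) → Fin (d+2) → A) (r : Fin (d+2)) : BB A d :=
  ∑ i, ∑ j, ∑ k, ∑ l, C (cf i j) * C (cg k l) *
    (C (W σ r j) * X l * C (W σ k i) + C (W σ r k) * X i * C (W σ l j))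
def Fp (σ : Matrix (Fin (d+2)) (Fin d) A) (cf : Fin (d+2) → Fin (d+2) → A) (r s q : Fin (d+2)) : PP A :=
  ∑ i, ∑ j, C (cf i j) * C (W σ q i) * xi σ r s j

variable (σ : Matrix (Fin (d+2)) (Fin d) A) (cf cg : Fin (d+2) → Fin (d+2) → A)

lemma hom_C_mul {ι : Type} (a : A) {p : MvPolynomial ι A} {n : ℕ} (hp : p.IsHomogeneous n) :
    (C a * p).IsHomogeneous n := by
  simpa using (isHomogeneous_C ι a).mul hp

lemma quad_hom : (quad cf).IsHomogeneous 2 :=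
  IsHomogeneous.sum _ _ _ fun i _ => IsHomogeneous.sum _ _ _ fun j _ =>
    hom_C_mul _ ((isHomogeneous_X A i).mul (isHomogeneous_X A j))
lemma ell_hom (j) : (ell σ j).IsHomogeneous 1 :=
  IsHomogeneous.sum _ _ _ fun i _ => by rw [mul_comm]; exact hom_C_mul _ (isHomogeneous_X A i)
lemma DD_hom : (DD σ cf cg).IsHomogeneous 2 :=
  IsHomogeneous.sum _ _ _ fun i _ => IsHomogeneous.sum _ _ _ fun j _ =>
   IsHomogeneous.sum _ _ _ fun k _ => IsHomogeneous.sum _ _ _ fun l _ => by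
    rw [mul_comm (X j * X l), ← mul_assoc, ← C_mul, ← C_mul]
    exact hom_C_mul _ ((isHomogeneous_X A j).mul (isHomogeneous_X A l))
lemma aa_hom (r) : (aa σ cf cg r).IsHomogeneous 1 :=
  IsHomogeneous.sum _ _ _ fun i _ => IsHomogeneous.sum _ _ _ fun j _ =>
   IsHomogeneous.sum _ _ _ fun k _ => IsHomogeneous.sum _ _ _ fun l _ => by
    rw [← C_mul]
    refine hom_C_mul _ (IsHomogeneous.add ?_ ?_)
    · rw [mul_assoc, mul_comm (X l)]
      exact hom_C_mul _ (hom_C_mul _ (isHomogeneous_X A l))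
    · rw [mul_assoc, mul_comm (X i)]
      exact hom_C_mul _ (hom_C_mul _ (isHomogeneous_X A i))
lemma xi_hom (r s t) : (xi σ r s t).IsHomogeneous 1 :=
  (hom_C_mul _ (isHomogeneous_X A _)).add (hom_C_mul _ (isHomogeneous_X A _))
lemma rho_hom (r s) {p : BB A d} {n : ℕ} (hp : p.IsHomogeneous n) : (rho σ r s p).IsHomogeneous n := by
  have := hp.aeval (xi σ r s) (fun i => xi_hom σ r s i)
  rw [one_mul] at this; exact this
lemma Fp_hom (r s q) : (Fp σ cf r s q).IsHomogeneous 1 :=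
  IsHomogeneous.sum _ _ _ fun i _ => IsHomogeneous.sum _ _ _ fun j _ => by
    rw [← C_mul]; exact hom_C_mul _ (xi_hom _ _ _ _)

lemma rho_X (r s t) : rho σ r s (X t) = xi σ r s t := by simp [rho]
lemma rho_C (r s) (a : A) : rho σ r s (C a) = C a := by
  rw [← algebraMap_eq]; exact (rho σ r s).commutes a
lemma tau_C (r s) (a : A) : (tau r s : PP A →ₐ[A] BB A d) (C a) = C a := by
  rw [← algebraMap_eq]; exact (tau r s).commutes a

lemma xi_s (r s) : xi σ r s s = C (W σ r s) * X 0 := by simp [xi, W_self]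
lemma xi_r (r s) : xi σ r s r = - (C (W σ r s) * X 1) := by
  simp [xi, W_self, W_swap σ s r]

lemma rho_ell (r s j) : rho σ r s (ell σ j) = 0 := by
  unfold ell
  rw [map_sum]
  have : ∀ t, rho σ r s (X t * C (σ t j)) = C (σ t j * W σ r t) * X 0 + C (σ t j * W σ s t) * X 1 := by
    intro t; rw [map_mul, rho_X, rho_C, xi, C_mul, C_mul]; ring
  simp_rw [this, Finset.sum_add_distrib, ← Finset.sum_mul, ← map_sum, W3]
  simp

lemma rho_quad (r s) : rho σ r s (quad cf) = X 0 * Fp σ cf r s r + X 1 * Fp σ cf r s s := by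
  unfold quad Fp
  simp_rw [map_sum, map_mul, rho_C, rho_X, Finset.mul_sum, ← Finset.sum_add_distrib]
  refine Finset.sum_congr rfl fun i _ => Finset.sum_congr rfl fun j _ => ?_
  conv_lhs => rw [xi]
  ring

lemma rho_LL (r s) {p : BB A d} (hp : p ∈ LL σ cf cg) :
    rho σ r s p ∈ Ideal.span {rho σ r s (quad cf), rho σ r s (quad cg)} := by
  have : LL σ cf cg ≤ (Ideal.span {rho σ r s (quad cf), rho σ r s (quad cg)}).comap (rho σ r s) := by
    refine Ideal.span_le.2 ?_
    rintro x (⟨j, rfl⟩ | h)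
    · simp [rho_ell]
    · simp only [Set.mem_insert_iff, Set.mem_singleton_iff] at h
      rcases h with rfl | rfl
      · exact Ideal.subset_span (by simp)
      · exact Ideal.subset_span (by simp)
  exact this hp

lemma D_eq (r s) : Fp σ cf r s r * Fp σ cg r s s - Fp σ cf r s s * Fp σ cg r s r =
    - (C (W σ r s) * rho σ r s (DD σ cf cg)) := by
  unfold DD Fp
  simp_rw [map_sum, map_mul, rho_C, rho_X, Finset.sum_mul_sum, Finset.mul_sum,
    ← Finset.sum_sub_distrib, ← Finset.sum_neg_distrib]
  refine Finset.sum_congr rfl fun i _ => ?_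
  rw [Finset.sum_comm]
  refine Finset.sum_congr rfl fun j _ => Finset.sum_congr rfl fun k _ =>
    Finset.sum_congr rfl fun l _ => ?_
  have h := W_pl σ r s i k
  rw [W_swap σ k s, W_swap σ i k] at h
  have h' := congrArg (C : A → PP A) h
  simp only [map_add, map_mul, map_neg, map_zero] at h'
  linear_combination - (C (cf i j) * C (cg k l) * xi σ r s j * xi σ r s l) * h'

/-- the quotient -/
abbrev QQ := BB A d ⧸ LL σ cf cg

lemma mk_ell (j) : Ideal.Quotient.mk (LL σ cf cg) (ell σ j) = 0 :=
  Ideal.Quotient.eq_zero_iff_mem.2 (Ideal.subset_span (Or.inl ⟨j, rfl⟩))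
lemma mk_f : Ideal.Quotient.mk (LL σ cf cg) (quad cf) = 0 :=
  Ideal.Quotient.eq_zero_iff_mem.2 (Ideal.subset_span (Or.inr (by simp)))
lemma mk_g : Ideal.Quotient.mk (LL σ cf cg) (quad cg) = 0 :=
  Ideal.Quotient.eq_zero_iff_mem.2 (Ideal.subset_span (Or.inr (by simp)))

lemma W_map {A' : Type} [CommRing A'] (g : A →+* A') (a b) : g (W σ a b) = W (σ.map g) a b := by
  unfold W Wd
  rw [RingHom.map_det]
  congr 1
  ext i j; revert j
  refine fcases _ ?_ ?_ ?_
  · intro j; simp [Wmat_castAdd]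
  · simp [Wmat_c0, Pi.single_apply, apply_ite g]
  · simp [Wmat_c1, Pi.single_apply, apply_ite g]

lemma mk_W2 (a b c) :
    Ideal.Quotient.mk (LL σ cf cg) (X a) * Ideal.Quotient.mk (LL σ cf cg) (C (W σ b c)) +
    Ideal.Quotient.mk (LL σ cf cg) (X b) * Ideal.Quotient.mk (LL σ cf cg) (C (W σ c a)) +
    Ideal.Quotient.mk (LL σ cf cg) (X c) * Ideal.Quotient.mk (LL σ cf cg) (C (W σ a b)) = 0 := by
  set q := Ideal.Quotient.mk (LL σ cf cg)
  have hW : ∀ a b, q (C (W σ a b)) = W (σ.map (q.comp C)) a b := fun a b => W_map σ (q.comp C) a b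
  have := W_cramer_left (σ.map (q.comp C)) b c a (fun t => q (X t))
  have h0 : ∀ j, ∑ t, q (X t) * (σ.map (q.comp C)) t j = 0 := by
    intro j
    have := mk_ell σ cf cg j
    rw [ell, map_sum] at this
    simpa using this
  simp_rw [h0, zero_mul, Finset.sum_const_zero] at this
  rw [hW, hW, hW, W_swap _ c a, W_swap _ a b]
  linear_combination this

lemma mk_xD (t) : Ideal.Quotient.mk (LL σ cf cg) (X t * DD σ cf cg) = 0 := by
  have hf := mk_f σ cf cg
  have hg := mk_g σ cf cg
  simp only [quad, map_sum, map_mul] at hf hg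
  simpa [DD] using xD0 (fun t => Ideal.Quotient.mk (LL σ cf cg) (X t))
    (fun a b => Ideal.Quotient.mk (LL σ cf cg) (C (W σ a b)))
    (fun a b => Ideal.Quotient.mk (LL σ cf cg) (C (cf a b)))
    (fun a b => Ideal.Quotient.mk (LL σ cf cg) (C (cg a b))) (mk_W2 σ cf cg) hf hg t

lemma mk_xa (r t) : Ideal.Quotient.mk (LL σ cf cg) (X t * aa σ cf cg r) =
    Ideal.Quotient.mk (LL σ cf cg) (C (W σ r t) * DD σ cf cg) := by
  have hf := mk_f σ cf cg
  have hg := mk_g σ cf cg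
  simp only [quad, map_sum, map_mul] at hf hg
  simpa [DD, aa] using xa (fun t => Ideal.Quotient.mk (LL σ cf cg) (X t))
    (fun a b => Ideal.Quotient.mk (LL σ cf cg) (C (W σ a b)))
    (fun a b => Ideal.Quotient.mk (LL σ cf cg) (C (cf a b)))
    (fun a b => Ideal.Quotient.mk (LL σ cf cg) (C (cg a b))) (mk_W2 σ cf cg)
    (fun a b => by rw [W_swap σ a b]; simp) hf hg r t

lemma mk_tau_xi (r s t) : Ideal.Quotient.mk (LL σ cf cg) (tau r s (xi σ r s t)) =
    Ideal.Quotient.mk (LL σ cf cg) (C (W σ r s) * X t) := by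
  have h := mk_W2 σ cf cg t r s
  rw [W_swap σ s t, W_swap σ t r] at *
  rw [W_swap σ t s] at *
  rw [xi, map_add, map_mul, map_mul, tau_C, tau_C]
  simp only [tau, aeval_X, map_add, map_mul, map_neg, Matrix.cons_val_zero, Matrix.cons_val_one, neg_neg] at h ⊢
  linear_combination -h

lemma mk_tau_rho (r s) {p : BB A d} {n : ℕ} (hp : p.IsHomogeneous n) :
    Ideal.Quotient.mk (LL σ cf cg) (tau r s (rho σ r s p)) =
    Ideal.Quotient.mk (LL σ cf cg) (C (W σ r s) ^ n * p) := by
  have h1 : ((Ideal.Quotient.mkₐ A (LL σ cf cg)).comp ((tau r s).comp (rho σ r s))) =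
      (Ideal.Quotient.mkₐ A (LL σ cf cg)).comp (aeval (fun t => (C (W σ r s) * X t : BB A d))) := by
    apply algHom_ext
    intro t
    simp only [AlgHom.comp_apply, rho_X, aeval_X, Ideal.Quotient.mkₐ_eq_mk]
    exact mk_tau_xi σ cf cg r s t
  have h2 := DFunLike.congr_fun h1 p
  simp only [AlgHom.comp_apply, Ideal.Quotient.mkₐ_eq_mk] at h2
  rw [h2]
  congr 1
  conv_lhs => rw [p.as_sum]
  conv_rhs => rw [p.as_sum]
  rw [map_sum, Finset.mul_sum]
  refine Finset.sum_congr rfl fun m hm => ?_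
  have hdeg : m.degree = n := by
    rw [← hp (mem_support_iff.1 hm), Finsupp.degree_eq_weight_one]; rfl
  rw [aeval_monomial, monomial_eq]
  simp only [mul_pow, Finsupp.prod_mul]
  have : (m.prod fun _ e => (C (W σ r s) : BB A d) ^ e) = C (W σ r s) ^ n := by
    rw [Finsupp.prod, Finset.prod_pow_eq_pow_sum, ← hdeg]; rfl
  rw [this, algebraMap_eq]; ring
end Bside

end part4

section part5

section absmain
variable {A : Type} [CommRing A] [IsDomain A] [UniqueFactorizationMonoid A] {d : ℕ}
variable (σ : Matrix (Fin (d+2)) (Fin d) A) (cf cg : Fin (d+2) → Fin (d+2) → A)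

def HK : Prop := ∀ r s, W σ r s ≠ 0 → ∀ h : PP A, Prime h → h ∣ rho σ r s (quad cf) →
  h ∣ rho σ r s (quad cg) → h ∣ C (W σ r s)

lemma HK_ne (hK : HK σ cf cg) {r s} (hrs : W σ r s ≠ 0) :
    rho σ r s (quad cf) ≠ 0 ∨ rho σ r s (quad cg) ≠ 0 := by
  by_contra! h
  have := hK r s hrs (X 0) X_prime (by rw [h.1]; exact dvd_zero _) (by rw [h.2]; exact dvd_zero _)
  obtain ⟨q, hq⟩ := this
  have := congrArg (coeff 0) hq
  rw [coeff_C, if_pos rfl, ← constantCoeff_eq, map_mul, constantCoeff_X, zero_mul] at this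
  exact hrs this

lemma D_hom (r s) : (Fp σ cf r s r * Fp σ cg r s s - Fp σ cf r s s * Fp σ cg r s r).IsHomogeneous 2 :=
  ((Fp_hom σ cf r s r).mul (Fp_hom σ cg r s s)).sub ((Fp_hom σ cf r s s).mul (Fp_hom σ cg r s r))

lemma DD_free (hK : HK σ cf cg) {r s} (hrs : W σ r s ≠ 0) (t : A)
    (ht : C t * DD σ cf cg ∈ LL σ cf cg) : t = 0 := by
  refine D_free (W σ r s) _ _ _ _ _ _ hrs (rho_quad σ cf r s) (rho_quad σ cg r s) (HK_ne σ cf cg hK hrs)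
    (hK r s hrs) (rho_hom σ r s (quad_hom cf)) (rho_hom σ r s (quad_hom cg)) (D_hom σ cf cg r s)
    (Fp_hom _ _ _ _ _) (Fp_hom _ _ _ _ _) (Fp_hom _ _ _ _ _) (Fp_hom _ _ _ _ _) t ?_
  have := rho_LL σ cf cg r s ht
  rw [map_mul, rho_C] at this
  rw [D_eq]
  have h2 := Ideal.mul_mem_left _ (-C (W σ r s)) this
  convert h2 using 1; ring

lemma InJ_of_mem {r s} {p : BB A d} (hp : p ∈ LL σ cf cg) :
    InJ (C (W σ r s)) (rho σ r s (quad cf)) (rho σ r s (quad cg)) (rho σ r s p) :=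
  ⟨0, by rw [pow_zero, one_mul]; exact rho_LL σ cf cg r s hp⟩

lemma InJ_neg {Δ F G h : PP A} (n : ℕ) (h' : InJ Δ F G ((-1)^n * h)) : InJ Δ F G h := by
  have := h'.mul ((-1)^n)
  rwa [← mul_assoc, ← mul_pow, neg_one_mul, neg_neg, one_pow, one_mul] at this

lemma step1 (hK : HK σ cf cg) {r s} (hrs : W σ r s ≠ 0) (a : BB A d) (ha : a.IsHomogeneous 1)
    (N : ℕ) (hN : ∀ i j, i + j = N + 2 → X s ^ i * X r ^ j * a ∈ LL σ cf cg) :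
    ∃ (M : ℕ) (v : Fin (d+2) → A), ∀ t, C (W σ r s ^ M) * (X t * a) - C (v t) * DD σ cf cg ∈ LL σ cf cg := by
  have hF := rho_quad σ cf r s
  have hG := rho_quad σ cg r s
  have hne := HK_ne σ cf cg hK hrs
  have key := desc_pow (W σ r s) _ _ _ _ _ _ hF hG hne
    (hK r s hrs) (rho_hom σ r s (quad_hom cf)) (rho_hom σ r s (quad_hom cg)) (D_hom σ cf cg r s)
    (rho σ r s a) (rho_hom σ r s ha) N ?_
  swap
  · intro i j hij
    have := InJ_of_mem σ cf cg (r := r) (s := s) (hN i j hij)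
    rw [map_mul, map_mul, map_pow, map_pow, rho_X, rho_X, xi_s, xi_r] at this
    apply InJ.cancel (N+2)
    apply InJ_neg j
    convert this using 1
    rw [← hij, pow_add, mul_pow, neg_pow (C (W σ r s) * X 1) j, mul_pow]; ring
  have hu : InJ (C (W σ r s)) (rho σ r s (quad cf)) (rho σ r s (quad cg)) (X 0 * (X 0 * rho σ r s a)) := by
    have := key 2 0 rfl
    convert this using 1; ring
  have huv : InJ (C (W σ r s)) (rho σ r s (quad cf)) (rho σ r s (quad cg)) (X 0 * (X 1 * rho σ r s a)) := by
    have := key 1 1 rfl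
    convert this using 1; ring
  have hv : InJ (C (W σ r s)) (rho σ r s (quad cf)) (rho σ r s (quad cg)) (X 1 * (X 1 * rho σ r s a)) := by
    have := key 0 2 rfl
    convert this using 1; ring
  have each : ∀ t, ∃ (M : ℕ) (v : A), C (W σ r s ^ M) * (X t * a) - C v * DD σ cf cg ∈ LL σ cf cg := by
    intro t
    have h1 : InJ (C (W σ r s)) (rho σ r s (quad cf)) (rho σ r s (quad cg)) (X 0 * rho σ r s (X t * a)) := by
      have := (hu.mul (C (W σ r t))).add (huv.mul (C (W σ s t)))
      rw [map_mul, rho_X, xi]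
      convert this using 1; ring
    have h2 : InJ (C (W σ r s)) (rho σ r s (quad cf)) (rho σ r s (quad cg)) (X 1 * rho σ r s (X t * a)) := by
      have := (huv.mul (C (W σ r t))).add (hv.mul (C (W σ s t)))
      rw [map_mul, rho_X, xi]
      convert this using 1; ring
    have hxa : (X t * a).IsHomogeneous 2 := (isHomogeneous_X A t).mul ha
    obtain ⟨M, c, k1, k2, e⟩ := deg2_eq (W σ r s) _ _ _ _ _ _ hF hG hne
      (hK r s hrs) (rho_hom σ r s (quad_hom cf)) (rho_hom σ r s (quad_hom cg)) (D_hom σ cf cg r s)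
      (rho σ r s (X t * a)) (rho_hom σ r s hxa) h1 h2
    refine ⟨M + 2, -(c * W σ r s ^ 3), ?_⟩
    rw [D_eq] at e
    generalize X t * a = pa at e hxa h1 h2 ⊢
    have e2 := congrArg (fun p => Ideal.Quotient.mk (LL σ cf cg) (tau r s p)) e
    simp only [map_add, map_mul, map_neg, map_pow, tau_C, mk_tau_rho σ cf cg r s (quad_hom cf),
      mk_tau_rho σ cf cg r s (quad_hom cg), mk_tau_rho σ cf cg r s (DD_hom σ cf cg), mk_f, mk_g,
      mk_tau_rho σ cf cg r s hxa] at e2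
    rw [← Ideal.Quotient.eq_zero_iff_mem]
    simp only [map_sub, map_mul, map_neg, map_pow] at e2 ⊢
    linear_combination e2
  choose M v hMv using each
  refine ⟨∑ t, M t, fun t => W σ r s ^ (∑ t, M t - M t) * v t, fun t => ?_⟩
  have h1 : M t ≤ ∑ t, M t := Finset.single_le_sum (fun _ _ => Nat.zero_le _) (Finset.mem_univ t)
  have h2 := Ideal.mul_mem_left _ (C (W σ r s ^ (∑ t, M t - M t))) (hMv t)
  convert h2 using 1
  have e : W σ r s ^ (∑ t, M t) = W σ r s ^ (∑ t, M t - M t) * W σ r s ^ M t := by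
    rw [← pow_add, Nat.sub_add_cancel h1]
  rw [e]
  simp only [C_mul]
  ring

lemma LL_deg1 {b : BB A d} (hb : b.IsHomogeneous 1) (h : b ∈ LL σ cf cg) :
    ∃ q : Fin d → A, b = ∑ j, C (q j) * ell σ j := by
  have main : ∀ p ∈ LL σ cf cg, ∃ q : Fin d → A, homogeneousComponent 1 p = ∑ j, C (q j) * ell σ j := by
    intro p hp
    refine Submodule.span_induction ?_ ?_ ?_ ?_ hp
    · rintro x (⟨j, rfl⟩ | h)
      · refine ⟨Pi.single j 1, ?_⟩
        rw [homogeneousComponent_eq_self (ell_hom σ j), Finset.sum_eq_single j]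
        · simp
        · intro i _ hi; simp [hi]
        · simp
      · refine ⟨0, ?_⟩
        have : x.IsHomogeneous 2 := by
          rcases h with rfl | rfl
          · exact quad_hom cf
          · exact quad_hom cg
        rw [homogeneousComponent_of_mem this]; simp
    · exact ⟨0, by simp⟩
    · rintro x y _ _ ⟨q, hq⟩ ⟨q', hq'⟩
      exact ⟨q + q', by simp [hq, hq', add_mul, Finset.sum_add_distrib]⟩
    · rintro a x hx ⟨q, hq⟩
      have h0 : homogeneousComponent 0 x = 0 := by
        have : LL σ cf cg ≤ RingHom.ker (constantCoeff : BB A d →+* A) := by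
          refine Ideal.span_le.2 ?_
          rintro x (⟨j, rfl⟩ | h)
          · simp [ell, RingHom.mem_ker]
          · rcases h with rfl | rfl <;> simp [quad, RingHom.mem_ker]
        have := this hx
        rw [RingHom.mem_ker, constantCoeff_eq] at this
        rw [homogeneousComponent_zero, this, C_0]
      refine ⟨fun j => coeff 0 a * q j, ?_⟩
      have : homogeneousComponent 1 (a • x) = C (coeff 0 a) * homogeneousComponent 1 x := by
        have hx' := sum_homogeneousComponent x
        rw [smul_eq_mul]
        conv_lhs => rw [← hx', Finset.mul_sum, map_sum]
        have each : ∀ i, homogeneousComponent 1 (a * homogeneousComponent i x) =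
            if i = 1 then C (coeff 0 a) * homogeneousComponent 1 x else 0 := by
          intro i
          rw [hc_mul _ _ (homogeneousComponent_isHomogeneous i x)]
          rcases i with _ | _ | i
          · simp only [h0, mul_zero]; simp
          · simp
          · simp
        simp_rw [each, Finset.sum_ite_eq']
        split_ifs with h3
        · rfl
        · rw [homogeneousComponent_eq_zero, mul_zero]; simpa using h3
      rw [this, hq, Finset.mul_sum]
      exact Finset.sum_congr rfl fun j _ => by rw [C_mul]; ring
  obtain ⟨q, hq⟩ := main b h
  rw [homogeneousComponent_eq_self hb] at hq
  exact ⟨q, hq⟩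

lemma degree_succ {ι : Type} {m : ι →₀ ℕ} {n : ℕ} (h : m.degree = n + 1) :
    ∃ t m', m = Finsupp.single t 1 + m' ∧ m'.degree = n := by
  have hm : m ≠ 0 := by rintro rfl; simp at h
  obtain ⟨t, ht⟩ := Finsupp.ne_iff.1 hm
  have e : m = Finsupp.single t 1 + (m - Finsupp.single t 1) := by
    rw [add_tsub_cancel_of_le]
    rw [Finsupp.single_le_iff]; simp at ht; omega
  refine ⟨t, _, e, ?_⟩
  have := congrArg Finsupp.degree e
  rw [h, map_add, Finsupp.degree_single] at this
  omega

lemma hom1_eq {b : BB A d} (hb : b.IsHomogeneous 1) : ∃ c : Fin (d+2) → A, b = ∑ t, X t * C (c t) := by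
  refine ⟨fun t => coeff (Finsupp.single t 1) b, ?_⟩
  ext m
  rw [coeff_sum]
  simp_rw [mul_comm (X _), coeff_C_mul, coeff_X]
  by_cases h : coeff m b = 0
  · rw [h, Finset.sum_eq_zero]
    intro t _
    split_ifs with h2
    · rw [h2, h]; simp
    · simp
  · have := hb h
    have h1 : m.degree = 1 := by rw [← this, Finsupp.degree_eq_weight_one]; rfl
    obtain ⟨t, ht⟩ : ∃ t, m = Finsupp.single t 1 := by
      obtain ⟨t, m', e, h'⟩ := degree_succ h1
      rw [Finsupp.degree_eq_zero_iff] at h'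
      exact ⟨t, by rw [e, h', add_zero]⟩
    subst ht
    rw [Finset.sum_eq_single t]
    · simp
    · intro i _ hi
      rw [if_neg, mul_zero]
      intro h3
      exact hi (Finsupp.single_left_injective one_ne_zero h3)
    · simp

lemma coeff_lin (c c' : Fin (d+2) → A) (h : ∑ t, (X t : BB A d) * C (c t) = ∑ t, X t * C (c' t)) : c = c' := by
  funext t
  have := congrArg (coeff (Finsupp.single t 1)) h
  simpa [coeff_sum, mul_comm (X _ : BB A d), coeff_C_mul, coeff_X, Finsupp.single_left_inj] using this

lemma ell_comb (q : Fin d → A) : ∑ j, C (q j) * ell σ j = ∑ t, X t * C (∑ j, σ t j * q j) := by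
  unfold ell
  simp_rw [Finset.mul_sum, map_sum, Finset.mul_sum]
  rw [Finset.sum_comm]
  refine Finset.sum_congr rfl fun t _ => Finset.sum_congr rfl fun j _ => ?_
  rw [C_mul]; ring

theorem abs_main (hW : ∀ π : A, Prime π → ∃ r s, ¬ π ∣ W σ r s) (h0 : ∃ x : A, Prime x)
    (hW4 : ∀ v : Fin (d+2) → A, (∀ j, ∑ t, σ t j * v t = 0) →
      ∃ c : Fin (d+2) → A, ∀ t, v t = ∑ r, c r * W σ r t)
    (hK : HK σ cf cg) (a : BB A d) (ha : a.IsHomogeneous 1)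
    (N : ℕ) (hN : ∀ r s i j, i + j = N + 2 → X s ^ i * X r ^ j * a ∈ LL σ cf cg) :
    ∃ c : Fin (d+2) → A, a - ∑ r, C (c r) * aa σ cf cg r ∈ LL σ cf cg := by
  obtain ⟨r, s, hrs⟩ := W_exists_ne σ hW h0
  have hfree : ∀ t : A, C t * DD σ cf cg ∈ LL σ cf cg → t = 0 := DD_free σ cf cg hK hrs
  obtain ⟨M, v, hv⟩ := step1 σ cf cg hK hrs a ha N (hN r s)
  have hdvd : ∀ t, W σ r s ^ M ∣ v t := by
    intro t
    have hex : ∀ p : Fin (d+2) × Fin (d+2), ∃ M' : ℕ, W σ r s ^ M ∣ v t * W σ p.1 p.2 ^ M' ∧ M' ≠ 0 := by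
      rintro ⟨r', s'⟩
      by_cases hrs' : W σ r' s' = 0
      · exact ⟨1, by simp [hrs'], one_ne_zero⟩
      obtain ⟨M', v', hv'⟩ := step1 σ cf cg hK hrs' a ha N (hN r' s')
      have e1 := Ideal.mul_mem_left _ (C (W σ r' s' ^ M')) (hv t)
      have e2 := Ideal.mul_mem_left _ (C (W σ r s ^ M)) (hv' t)
      have e3 := sub_mem e2 e1
      have : W σ r' s' ^ M' * v t - W σ r s ^ M * v' t = 0 := by
        apply hfree
        convert e3 using 1
        simp only [C_sub, C_mul]; ring
      refine ⟨M' + 1, ⟨v' t * W σ r' s', ?_⟩, by omega⟩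
      rw [pow_succ]
      linear_combination W σ r' s' * this
    choose M' hM' hM'0 using hex
    refine dvd_of_dvd_mul_all (fun p : Fin (d+2) × Fin (d+2) => W σ p.1 p.2 ^ M' p) ?_ _
      (pow_ne_zero _ hrs) (v t) hM'
    intro π hπ
    obtain ⟨a, b, hab⟩ := hW π hπ
    exact ⟨(a, b), fun h => hab (hπ.dvd_of_dvd_pow h)⟩
  choose w hw using hdvd
  have hΔ : W σ r s ^ M ≠ 0 := pow_ne_zero _ hrs
  have hσw : ∀ j, ∑ t, σ t j * w t = 0 := by
    intro j
    have h1 : ∑ t, σ t j * v t = 0 := by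
      apply hfree
      have h2 : C (W σ r s ^ M) * (ell σ j * a) ∈ LL σ cf cg :=
        Ideal.mul_mem_left _ _ (Ideal.mul_mem_right _ _ (Ideal.subset_span (Or.inl ⟨j, rfl⟩)))
      have h3 : ∑ t, C (σ t j) * (C (W σ r s ^ M) * (X t * a) - C (v t) * DD σ cf cg) ∈ LL σ cf cg :=
        sum_mem fun t _ => Ideal.mul_mem_left _ _ (hv t)
      convert sub_mem h2 h3 using 1
      rw [ell]
      simp_rw [mul_sub, Finset.sum_sub_distrib, Finset.sum_mul, Finset.mul_sum, map_sum, Finset.sum_mul]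
      have : ∀ t, C (W σ r s ^ M) * (X t * C (σ t j) * a) = C (σ t j) * (C (W σ r s ^ M) * (X t * a)) :=
        fun t => by ring
      simp_rw [this, sub_sub_cancel, C_mul, mul_assoc]
    have h2 : W σ r s ^ M * ∑ t, σ t j * w t = 0 := by
      rw [← h1, Finset.mul_sum]
      exact Finset.sum_congr rfl fun t _ => by rw [hw]; ring
    exact (mul_eq_zero.1 h2).resolve_left hΔ
  obtain ⟨c, hc⟩ := hW4 w hσw
  refine ⟨c, ?_⟩
  set b := a - ∑ r, C (c r) * aa σ cf cg r with hb
  have hbh : b.IsHomogeneous 1 := ha.sub (IsHomogeneous.sum _ _ _ fun i _ => hom_C_mul _ (aa_hom _ _ _ _))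
  have hxb : ∀ t, C (W σ r s ^ M) * (X t * b) ∈ LL σ cf cg := by
    intro t
    have h1 := hv t
    rw [← Ideal.Quotient.eq_zero_iff_mem] at h1 ⊢
    have h2 := fun r => mk_xa σ cf cg r t
    have h3 : Ideal.Quotient.mk (LL σ cf cg) (X t * b) =
        Ideal.Quotient.mk (LL σ cf cg) (X t * a) - Ideal.Quotient.mk (LL σ cf cg) (C (w t) * DD σ cf cg) := by
      rw [hb, mul_sub, map_sub, Finset.mul_sum, map_sum]
      congr 1
      rw [hc, map_sum, Finset.sum_mul, map_sum]
      refine Finset.sum_congr rfl fun q _ => ?_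
      rw [mul_left_comm, map_mul, h2, C_mul, mul_assoc, map_mul, map_mul, map_mul]
    rw [map_mul, h3]
    rw [hw] at h1
    simp only [map_sub, map_mul, map_pow] at h1 ⊢
    linear_combination h1
  have hrb : rho σ r s b = 0 := by
    refine deg1_zero (W σ r s) _ _ _ _ _ _ hrs (rho_quad σ cf r s) (rho_quad σ cg r s) (HK_ne σ cf cg hK hrs)
      (hK r s hrs) (rho_hom σ r s (quad_hom cf)) (rho_hom σ r s (quad_hom cg)) (D_hom σ cf cg r s)
      _ (rho_hom σ r s hbh) ?_ ?_
    · have := InJ_of_mem σ cf cg (r := r) (s := s) (hxb s)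
      rw [map_mul, map_mul, rho_X, rho_C, xi_s] at this
      apply InJ.cancel (M+1)
      convert this using 1
      rw [C_pow]; ring
    · have := InJ_of_mem σ cf cg (r := r) (s := s) (hxb r)
      rw [map_mul, map_mul, rho_X, rho_C, xi_r] at this
      apply InJ.cancel (M+1)
      apply InJ_neg 1
      convert this using 1
      rw [C_pow]; ring
  have hΔb : C (W σ r s) * b ∈ LL σ cf cg := by
    have := mk_tau_rho σ cf cg r s hbh
    rw [hrb, map_zero, map_zero, pow_one] at this
    exact Ideal.Quotient.eq_zero_iff_mem.1 this.symm
  obtain ⟨q, hq⟩ := LL_deg1 σ cf cg (hom_C_mul _ hbh) hΔb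
  obtain ⟨β, hβ⟩ := hom1_eq hbh
  rw [ell_comb, hβ, Finset.mul_sum] at hq
  have := coeff_lin (fun t => W σ r s * β t) _ (by rw [← hq]; exact Finset.sum_congr rfl fun t _ => by rw [C_mul]; ring)
  obtain ⟨b', hb'⟩ := TF σ hW _ hrs β q (fun t => congrFun this t)
  have : b = ∑ j, C (b' j) * ell σ j := by
    rw [ell_comb, hβ]; exact Finset.sum_congr rfl fun t _ => by rw [hb']
  rw [this]
  exact sum_mem fun j _ => Ideal.mul_mem_left _ _ (Ideal.subset_span (Or.inl ⟨j, rfl⟩))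

theorem abs_rel (hW : ∀ π : A, Prime π → ∃ r s, ¬ π ∣ W σ r s) (h0 : ∃ x : A, Prime x)
    (hK : HK σ cf cg) (c : Fin (d+2) → A) (h : ∑ r, C (c r) * aa σ cf cg r ∈ LL σ cf cg) :
    ∃ b : Fin d → A, ∀ t, c t = ∑ j, σ t j * b j := by
  obtain ⟨r, s, hrs⟩ := W_exists_ne σ hW h0
  refine kerW σ hW h0 c fun t => ?_
  apply DD_free σ cf cg hK hrs
  have h1 := Ideal.mul_mem_left _ (X t) h
  rw [← Ideal.Quotient.eq_zero_iff_mem] at h1 ⊢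
  rw [← h1, Finset.mul_sum, map_sum, map_sum, Finset.sum_mul, map_sum]
  refine Finset.sum_congr rfl fun q _ => ?_
  rw [mul_left_comm, map_mul _ (C (c q)) (X t * _), mk_xa, C_mul, mul_assoc, map_mul, map_mul]

lemma abs_conv (r s t) : X s * (X t * aa σ cf cg r) ∈ LL σ cf cg := by
  rw [← Ideal.Quotient.eq_zero_iff_mem, map_mul, mk_xa, ← map_mul, mul_left_comm, map_mul, mk_xD, mul_zero]
end absmain

end part5

section part6

section equivT
open Polynomial MvPolynomial Ideal Nat RingHom List
variable {k : Type*} [Field k] {n : ℕ} (f : MvPolynomial (Fin (n + 1)) k)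
variable (v w : Fin (n + 1) →₀ ℕ)




variable {f v} in
lemma lt_up (vlt : ∀ i, v i < (2 + f.totalDegree)) : ∀ l ∈ ofFn v, l < (2 + f.totalDegree) := by
  grind




/-- We construct an algebra map `NT1 f c` which maps `X_i` into `X_i + c • X_0 ^ r_i` when `i ≠ 0`
and `X_0` to `X_0`. -/
abbrev NT1 (c : k) :
    MvPolynomial (Fin (n + 1)) k →ₐ[k] MvPolynomial (Fin (n + 1)) k :=
  aeval fun i ↦ if i = 0 then X 0 else X i + c • X 0 ^ ((2 + f.totalDegree) ^ (i).1)

lemma t1_comp_t1_neg (c : k) : (NT1 f c).comp (NT1 f (-c)) = AlgHom.id _ _ := by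
  rw [comp_aeval, ← MvPolynomial.aeval_X_left]
  ext i v
  cases i using Fin.cases <;> simp

/-- `NT1 f 1` leads to an algebra equiv `NT f`. -/
abbrev NT := AlgEquiv.ofAlgHom (NT1 f 1) (NT1 f (-1))
  (t1_comp_t1_neg f 1) (by simpa using t1_comp_t1_neg f (-1))

lemma sum_r_mul_ne (vlt : ∀ i, v i < (2 + f.totalDegree)) (wlt : ∀ i, w i < (2 + f.totalDegree)) (ne : v ≠ w) :
    ∑ x : Fin (n + 1), ((2 + f.totalDegree) ^ (x).1) * v x ≠ ∑ x : Fin (n + 1), ((2 + f.totalDegree) ^ (x).1) * w x := by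
  intro h
  refine ne <| Finsupp.ext <| congrFun <| ofFn_inj.mp ?_
  apply ofDigits_inj_of_len_eq (Nat.lt_add_right f.totalDegree one_lt_two)
    (by simp) (lt_up vlt) (lt_up wlt)
  simpa only [ofDigits_eq_sum_mapIdx, mapIdx_eq_ofFn, get_ofFn, length_ofFn,
    Fin.val_cast, mul_comm, sum_ofFn] using! h

lemma degreeOf_zero_t {a : k} (ha : a ≠ 0) : ((NT f) (monomial v a)).degreeOf 0 =
    ∑ i : Fin (n + 1), (((2 + f.totalDegree) ^ (i).1)) * v i := by
  rw [← natDegree_finSuccEquiv, monomial_eq, Finsupp.prod_pow v fun a ↦ X a]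
  simp only [Fin.prod_univ_succ, Fin.sum_univ_succ, map_mul, map_prod, map_pow,
    AlgEquiv.ofAlgHom_apply, MvPolynomial.aeval_C, MvPolynomial.aeval_X, if_pos, Fin.succ_ne_zero,
    ite_false, one_smul, map_add, finSuccEquiv_X_zero, finSuccEquiv_X_succ, algebraMap_eq]
  have h (i : Fin n) :
      (Polynomial.C (X (R := k) i) + Polynomial.X ^ ((2 + f.totalDegree) ^ (i.succ).1)) ^ v i.succ ≠ 0 :=
    pow_ne_zero (v i.succ) (leadingCoeff_ne_zero.mp <| by simp [add_comm, leadingCoeff_X_pow_add_C])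
  rw [natDegree_mul (by simp [ha]) (mul_ne_zero (by simp) (Finset.prod_ne_zero_iff.mpr
    (fun i _ ↦ h i))), natDegree_mul (by simp) (Finset.prod_ne_zero_iff.mpr (fun i _ ↦ h i)),
    natDegree_prod _ _ (fun i _ ↦ h i), natDegree_finSuccEquiv, degreeOf_C]
  simpa only [natDegree_pow, zero_add, natDegree_X, mul_one, Fin.val_zero, pow_zero, one_mul,
    add_right_inj] using Finset.sum_congr rfl (fun i _ ↦ by
    rw [add_comm (Polynomial.C _), natDegree_X_pow_add_C, mul_comm])

/-- `NT` maps different monomials of `f` to polynomials with different degrees in `X_0`. -/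
lemma degreeOf_t_ne_of_ne (hv : v ∈ f.support) (hw : w ∈ f.support) (ne : v ≠ w) :
    (NT f <| monomial v <| coeff v f).degreeOf 0 ≠
    (NT f <| monomial w <| coeff w f).degreeOf 0 := by
  rw [degreeOf_zero_t _ _ <| mem_support_iff.mp hv, degreeOf_zero_t _ _ <| mem_support_iff.mp hw]
  refine sum_r_mul_ne f v w (fun i ↦ ?_) (fun i ↦ ?_) ne <;>
  exact lt_of_le_of_lt ((monomial_le_degreeOf i ‹_›).trans (degreeOf_le_totalDegree f i))
    (by lia)

lemma leadingCoeff_finSuccEquiv_t :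
    (finSuccEquiv k n ((NT f) ((monomial v) (coeff v f)))).leadingCoeff =
    algebraMap k _ (coeff v f) := by
  rw [monomial_eq, Finsupp.prod_fintype]
  · simp only [map_mul, map_prod, leadingCoeff_mul, leadingCoeff_prod]
    rw [AlgEquiv.ofAlgHom_apply, algHom_C, algebraMap_eq, finSuccEquiv_apply,
      eval₂Hom_C, coe_comp]
    simp only [AlgEquiv.ofAlgHom_apply, Function.comp_apply, leadingCoeff_C, map_pow,
      leadingCoeff_pow, algebraMap_eq]
    have : ∀ j, ((finSuccEquiv k n) ((NT1 f) 1 (X j))).leadingCoeff = 1 := fun j ↦ by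
      by_cases h : j = 0
      · simp [h, finSuccEquiv_apply]
      · simp only [aeval_eq_bind₁, bind₁_X_right, if_neg h, one_smul, map_add, map_pow]
        obtain ⟨i, rfl⟩ := Fin.exists_succ_eq.mpr h
        simp [finSuccEquiv_X_succ, finSuccEquiv_X_zero, add_comm]
    simp only [this, one_pow, Finset.prod_const_one, mul_one]
  exact fun i ↦ pow_zero _

/-- `NT` maps `f` into some polynomial in `X_0` such that the leading coefficient is invertible. -/
lemma NT_leadingcoeff_isUnit (fne : f ≠ 0) :
    IsUnit (finSuccEquiv k n (NT f f)).leadingCoeff := by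
  obtain ⟨v, vin, vs⟩ := Finset.exists_max_image f.support
    (fun v ↦ (NT f ((monomial v) (coeff v f))).degreeOf 0) (support_nonempty.mpr fne)
  set h := fun w ↦ (MvPolynomial.monomial w) (coeff w f)
  simp only [← natDegree_finSuccEquiv] at vs
  replace vs : ∀ x ∈ f.support \ {v}, (finSuccEquiv k n ((NT f) (h x))).degree <
      (finSuccEquiv k n ((NT f) (h v))).degree := by
    intro x hx
    obtain ⟨h1, h2⟩ := Finset.mem_sdiff.mp hx
    apply degree_lt_degree <| lt_of_le_of_ne (vs x h1) ?_
    simpa only [natDegree_finSuccEquiv]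
      using degreeOf_t_ne_of_ne f _ _ h1 vin <| ne_of_not_mem_cons h2
  have coeff : (finSuccEquiv k n ((NT f) (h v + ∑ x ∈ f.support \ {v}, h x))).leadingCoeff =
      (finSuccEquiv k n ((NT f) (h v))).leadingCoeff := by
    simp only [map_add, map_sum]
    rw [add_comm]
    apply leadingCoeff_add_of_degree_lt <| (lt_of_le_of_lt <| degree_sum_le _ _) ?_
    have h2 : h v ≠ 0 := by simpa [h] using mem_support_iff.mp vin
    replace h2 : (finSuccEquiv k n ((NT f) (h v))) ≠ 0 := fun eq ↦ h2 <|
      by simpa only [map_eq_zero_iff _ (AlgEquiv.injective _)] using eq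
    exact (Finset.sup_lt_iff <| Ne.bot_lt (fun x ↦ h2 <| degree_eq_bot.mp x)).mpr vs
  nth_rw 2 [← f.support_sum_monomial_coeff]
  rw [Finset.sum_eq_add_sum_sdiff_singleton_of_mem vin h]
  rw [leadingCoeff_finSuccEquiv_t] at coeff
  simpa only [coeff, algebraMap_eq] using (mem_support_iff.mp vin).isUnit.map MvPolynomial.C

end equivT


end part6

section part7

section regtriple
open Polynomial

/-- `α` monic, `P` a prime of `A` of height at most one given as `span {π}`: any prime of `A[X]`
containing `α` and lying over it has height at most two. -/
lemma height_le_two {A : Type*} [CommRing A] [IsNoetherianRing A] (α : A[X]) (hα : α.Monic)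
    (π : A) (Q : Ideal A[X]) [hQ : Q.IsPrime] (hαQ : α ∈ Q)
    (hQc : Q.comap (Polynomial.C : A →+* A[X]) = Ideal.span {π}) : Q.height ≤ 2 := by
  classical
  have hle : Ideal.span (({α, Polynomial.C π} : Finset A[X]) : Set A[X]) ≤ Q := by
    rw [Ideal.span_le]
    intro x hx
    simp only [Finset.coe_insert, Finset.coe_singleton, Set.mem_insert_iff,
      Set.mem_singleton_iff] at hx
    rcases hx with rfl | rfl
    · exact hαQ
    · have : π ∈ Q.comap (Polynomial.C : A →+* A[X]) := by rw [hQc]; exact Ideal.mem_span_singleton_self π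
      exact this
  obtain ⟨Q0, hQ0, hQ0Q⟩ := Ideal.exists_minimalPrimes_le hle
  have hQ0p : Q0.IsPrime := hQ0.1.1
  have hα0 : α ∈ Q0 := hQ0.1.2 (Ideal.subset_span (by simp))
  have hπ0 : Polynomial.C π ∈ Q0 := hQ0.1.2 (Ideal.subset_span (by simp))
  have hQQ : Q0 = Q := by
    refine le_antisymm hQ0Q fun x hx => ?_
    by_contra hx0
    have hIntg : ∃ p : A[X], p.Monic ∧ p.eval₂ (Polynomial.C : A →+* A[X]) x ∈ Q0 := by
      have : Module.Finite A (A[X] ⧸ Ideal.span {α}) := hα.finite_quotient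
      obtain ⟨p, hp, hpx⟩ := Algebra.IsIntegral.isIntegral (R := A) (Ideal.Quotient.mk (Ideal.span {α}) x)
      refine ⟨p, hp, ?_⟩
      have h2 : Ideal.Quotient.mk (Ideal.span {α}) (p.eval₂ (Polynomial.C : A →+* A[X]) x) = 0 := by
        rw [Polynomial.hom_eval₂]; exact hpx
      rw [Ideal.Quotient.eq_zero_iff_mem] at h2
      exact (Ideal.span_singleton_le_iff_mem _).2 hα0 h2
    obtain ⟨p, hp, hpx⟩ := hIntg
    have hne : p.map (Ideal.Quotient.mk (Q0.comap (Polynomial.C : A →+* A[X]))) ≠ 0 := by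
      have : Nontrivial (A ⧸ (Q0.comap (Polynomial.C : A →+* A[X]))) := Ideal.Quotient.nontrivial_iff.2 (Ideal.IsPrime.ne_top inferInstance)
      exact (hp.map _).ne_zero
    have := Ideal.comap_lt_comap_of_root_mem_sdiff (f := (Polynomial.C : A →+* A[X])) hQ0Q ⟨hx, hx0⟩ hne hpx
    rw [hQc] at this
    exact absurd ((Ideal.span_singleton_le_iff_mem _).2 (show π ∈ Ideal.comap Polynomial.C Q0 from hπ0)) (not_le_of_gt this)
  rw [← hQQ]
  refine (Ideal.height_le_card_of_mem_minimalPrimes_span_finset hQ0).trans ?_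
  exact_mod_cast Finset.card_le_two

lemma regtriple_poly {A : Type*} [CommRing A] [IsDomain A] [UniqueFactorizationMonoid A]
    [IsNoetherianRing A] (J : Ideal A[X]) (α : A[X]) (hα : α.Monic) (hαJ : α ∈ J)
    (hJ : ∀ Q : Ideal A[X], Q.IsPrime → J ≤ Q → 3 ≤ Q.height) :
    ∃ β ∈ J, ∃ γ ∈ J, (∀ a b, β * a = α * b → α ∣ a) ∧
      (∀ a b c, γ * a = α * b + β * c → ∃ b' c', a = α * b' + β * c') := by
  classical
  set I' := J.comap (Polynomial.C : A →+* A[X]) with hI'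
  have key : ∀ π : A, (Ideal.span {π}).IsPrime → ¬ I' ≤ Ideal.span {π} := by
    intro π hπ hle
    have hfin : Module.Finite A (A[X] ⧸ Ideal.span {α}) := hα.finite_quotient
    obtain ⟨Q, hQ1, hQ2, hQ3⟩ := Ideal.exists_ideal_over_prime_of_isIntegral
      (R := A) (S := A[X] ⧸ Ideal.span {α}) (Ideal.span {π})
      (J.map (Ideal.Quotient.mk (Ideal.span {α}))) (by
        intro a ha
        apply hle
        rw [Ideal.mem_comap] at ha ⊢
        have : Ideal.Quotient.mk (Ideal.span {α}) (Polynomial.C a) ∈ J.map (Ideal.Quotient.mk (Ideal.span {α})) := ha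
        rw [Ideal.mem_map_iff_of_surjective _ Ideal.Quotient.mk_surjective] at this
        obtain ⟨x, hx, hxa⟩ := this
        rw [Ideal.Quotient.eq] at hxa
        have h3 := (Ideal.span_singleton_le_iff_mem _).2 hαJ hxa
        have := J.sub_mem hx h3
        simpa using this)
    have hQp : (Q.comap (Ideal.Quotient.mk (Ideal.span {α}))).IsPrime := inferInstance
    have h1 := hJ (Q.comap (Ideal.Quotient.mk (Ideal.span {α}))) hQp
      (by rw [← Ideal.map_le_iff_le_comap]; exact hQ1)
    have h2 := height_le_two α hα π (Q.comap (Ideal.Quotient.mk (Ideal.span {α})))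
      (by rw [Ideal.mem_comap, Ideal.Quotient.eq_zero_iff_mem.2 (Ideal.mem_span_singleton_self α)]; exact Q.zero_mem)
      (by rw [Ideal.comap_comap]; exact hQ3)
    have := h1.trans h2
    exact absurd this (by norm_num)
  have h0 : ∃ β ∈ I', β ≠ 0 := by
    by_contra! h
    refine key 0 (by rw [Set.singleton_zero, Ideal.span_zero]; exact Ideal.isPrime_bot) ?_
    intro x hx
    rw [h x hx]; exact Submodule.zero_mem _
  obtain ⟨β, hβ, hβ0⟩ := h0
  have h1 : ∃ γ ∈ I', ∀ π, Prime π → π ∣ β → ¬ π ∣ γ := by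
    by_contra! h
    set s := (UniqueFactorizationMonoid.factors β).toFinset with hs
    have hsub : (I' : Set A) ⊆ ⋃ i ∈ (s : Set A), (Ideal.span {i} : Set A) := by
      intro γ hγ
      obtain ⟨π, hπ, h2, h3⟩ := h γ hγ
      obtain ⟨q, hq, hqa⟩ := UniqueFactorizationMonoid.exists_mem_factors_of_dvd hβ0 hπ.irreducible h2
      simp only [Set.mem_iUnion]
      exact ⟨q, by simp [hs, hq], Ideal.mem_span_singleton.2 (hqa.symm.dvd.trans h3)⟩
    have hpr : ∀ i ∈ s, (Ideal.span {i}).IsPrime := by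
      intro i hi
      have : Prime i := UniqueFactorizationMonoid.prime_of_factor i (by simpa [hs] using hi)
      exact (Ideal.span_singleton_prime this.ne_zero).2 this
    obtain ⟨i, hi, hle⟩ := (Ideal.subset_union_prime (f := fun i => Ideal.span {i}) 0 0 (fun i hi _ _ => hpr i hi)).1 hsub
    exact key i (hpr i hi) hle
  obtain ⟨γ, hγ, hγβ⟩ := h1
  have hcop : ∀ a, β ∣ γ * a → β ∣ a := by
    intro a h
    have : IsRelPrime β γ := by
      refine UniqueFactorizationMonoid.isRelPrime_iff_no_prime_factors hβ0 |>.2 ?_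
      intro π h1 h2 h3
      exact hγβ π h3 h1 h2
    exact this.dvd_of_dvd_mul_left h
  refine ⟨Polynomial.C β, hβ, Polynomial.C γ, hγ, ?_, ?_⟩
  · intro a b h
    have h2 : (β • a) %ₘ α = 0 := by
      rw [Polynomial.modByMonic_eq_zero_iff_dvd hα, Polynomial.smul_eq_C_mul, h]; exact dvd_mul_right _ _
    rw [Polynomial.smul_modByMonic] at h2
    rw [← Polynomial.modByMonic_eq_zero_iff_dvd hα]
    exact (smul_eq_zero.1 h2).resolve_left hβ0
  · intro a b c h
    have h2 : (γ • a - β • c) %ₘ α = 0 := by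
      rw [Polynomial.modByMonic_eq_zero_iff_dvd hα, Polynomial.smul_eq_C_mul, Polynomial.smul_eq_C_mul, h]
      exact ⟨b, by ring⟩
    rw [Polynomial.sub_modByMonic, Polynomial.smul_modByMonic, Polynomial.smul_modByMonic, sub_eq_zero] at h2
    have h3 : Polynomial.C β ∣ a %ₘ α := by
      rw [Polynomial.C_dvd_iff_dvd_coeff]
      intro i
      apply hcop
      have := congrArg (fun p => p.coeff i) h2
      simp only [Polynomial.coeff_smul, smul_eq_mul] at this
      rw [this]; exact dvd_mul_right _ _
    obtain ⟨c', hc'⟩ := h3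
    refine ⟨a /ₘ α, c', ?_⟩
    rw [← hc', add_comm]; exact (Polynomial.modByMonic_add_div a α).symm

end regtriple

lemma regtriple {k : Type} [Field k] {n : ℕ} (I : Ideal (MvPolynomial (Fin (n+1)) k))
    (hI : ∀ Q : Ideal (MvPolynomial (Fin (n+1)) k), Q.IsPrime → I ≤ Q → 3 ≤ Q.height) :
    ∃ α ∈ I, ∃ β ∈ I, ∃ γ ∈ I, α ≠ 0 ∧ (∀ a b, β * a = α * b → α ∣ a) ∧
      (∀ a b c, γ * a = α * b + β * c → ∃ b' c', a = α * b' + β * c') := by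
  have h0 : ∃ f ∈ I, f ≠ 0 := by
    by_contra! h
    have hb : I ≤ ⊥ := fun x hx => by rw [h x hx]; exact Submodule.zero_mem _
    have := hI ⊥ Ideal.isPrime_bot hb
    rw [Ideal.height_bot] at this
    simp at this
  obtain ⟨f, hf, hf0⟩ := h0
  let e : MvPolynomial (Fin (n+1)) k ≃+* Polynomial (MvPolynomial (Fin n) k) :=
    ((NT f).trans (finSuccEquiv k n)).toRingEquiv
  have hu : IsUnit (e f).leadingCoeff := NT_leadingcoeff_isUnit f hf0
  obtain ⟨u, hu⟩ := hu
  set α := e f * Polynomial.C (↑u⁻¹ : MvPolynomial (Fin n) k) with hαdef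
  have hα : α.Monic := by
    rw [Polynomial.Monic, hαdef, Polynomial.leadingCoeff_mul, Polynomial.leadingCoeff_C, ← hu, Units.mul_inv]
  have hmem : ∀ x, x ∈ I.comap (e.symm : Polynomial (MvPolynomial (Fin n) k) →+* _) ↔ e.symm x ∈ I := fun x => Iff.rfl
  have hαJ : α ∈ I.comap (e.symm : Polynomial (MvPolynomial (Fin n) k) →+* _) := by
    rw [hmem, hαdef, map_mul, RingEquiv.symm_apply_apply]
    exact I.mul_mem_right _ hf
  obtain ⟨β, hβ, γ, hγ, h1, h2⟩ := regtriple_poly _ α hα hαJ (by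
    intro Q hQ hle
    have := hI (Q.comap (e : _ →+* Polynomial (MvPolynomial (Fin n) k))) inferInstance (by
      intro x hx
      apply hle
      rw [hmem]
      simpa using hx)
    have h9 := RingEquiv.height_comap e Q
    exact h9 ▸ this)
  refine ⟨e.symm α, hαJ, e.symm β, hβ, e.symm γ, hγ, ?_, ?_, ?_⟩
  · simpa using hα.ne_zero
  · intro a b h
    have := h1 (e a) (e b) (by apply e.symm.injective; simpa using h)
    obtain ⟨c, hc⟩ := this
    exact ⟨e.symm c, by rw [← map_mul, ← hc]; simp⟩
  · intro a b c h
    obtain ⟨b', c', h'⟩ := h2 (e a) (e b) (e c) (by apply e.symm.injective; simpa using h)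
    exact ⟨e.symm b', e.symm c', by rw [← map_mul, ← map_mul, ← map_add, ← h']; simp⟩


end part7

section part8

section hW4sec
variable {A : Type} [CommRing A] {d : ℕ}

/-- the ideal of maximal minors, as generated by the `W σ r s`. -/
def WI (σ : Matrix (Fin (d+2)) (Fin d) A) : Ideal A :=
  Ideal.span (Set.range fun p : Fin (d+2) × Fin (d+2) => W σ p.1 p.2)

lemma hW_of_ht [IsDomain A] [IsNoetherianRing A] (σ : Matrix (Fin (d+2)) (Fin d) A)
    (hI : ∀ Q : Ideal A, Q.IsPrime → WI σ ≤ Q → 3 ≤ Q.height) :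
    ∀ π : A, Prime π → ∃ r s, ¬ π ∣ W σ r s := by
  intro π hπ
  by_contra! h
  have hp : (Ideal.span {π}).IsPrime := (Ideal.span_singleton_prime hπ.ne_zero).2 hπ
  have h1 := hI _ hp (by
    rw [WI, Ideal.span_le]
    rintro _ ⟨p, rfl⟩
    exact Ideal.mem_span_singleton.2 (h _ _))
  have h2 := Ideal.height_span_singleton_le_one hπ.not_unit
  have := h1.trans h2
  exact absurd this (by norm_num)

lemma WI_mul (σ : Matrix (Fin (d+2)) (Fin d) A) (v : Fin (d+2) → A)
    (hv : ∀ j, ∑ t, σ t j * v t = 0) (α : A) (hα : α ∈ WI σ) :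
    ∃ p : Fin (d+2) → A, ∀ t, α * v t = ∑ r, p r * W σ r t := by
  unfold WI at hα
  induction hα using Submodule.span_induction with
  | mem x h =>
    obtain ⟨⟨b, c⟩, rfl⟩ := h
    refine ⟨fun r => v c * (if r = b then 1 else 0) - v b * (if r = c then 1 else 0), fun t => ?_⟩
    have := W_cramer_left σ b c t v
    simp only [mul_comm (v _) (σ _ _), hv, zero_mul, Finset.sum_const_zero] at this
    simp only [sub_mul, Finset.sum_sub_distrib, mul_assoc, ite_mul, one_mul, zero_mul, mul_ite, mul_zero,
      Finset.sum_ite_eq', Finset.mem_univ, if_true]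
    rw [this, W_swap σ t c]; ring
  | zero => exact ⟨0, fun t => by simp⟩
  | add x y _ _ hx hy =>
    obtain ⟨p, hp⟩ := hx
    obtain ⟨q, hq⟩ := hy
    exact ⟨fun r => p r + q r, fun t => by
      rw [add_mul, hp, hq, ← Finset.sum_add_distrib]; exact Finset.sum_congr rfl fun r _ => by ring⟩
  | smul a x _ hx =>
    obtain ⟨p, hp⟩ := hx
    exact ⟨fun r => a * p r, fun t => by
      rw [smul_eq_mul, mul_assoc, hp, Finset.mul_sum]; exact Finset.sum_congr rfl fun r _ => by ring⟩

lemma W3' (σ : Matrix (Fin (d+2)) (Fin d) A) (b : Fin d → A) (t) :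
    ∑ r, (∑ j, σ r j * b j) * W σ r t = 0 := by
  have : ∀ r, (∑ j, σ r j * b j) * W σ r t = - ∑ j, b j * (σ r j * W σ t r) := by
    intro r
    rw [W_swap σ r t, Finset.sum_mul, ← Finset.sum_neg_distrib]
    exact Finset.sum_congr rfl fun r _ => by ring
  simp only [this]
  rw [Finset.sum_neg_distrib, Finset.sum_comm]
  simp only [← Finset.mul_sum, W3, mul_zero, Finset.sum_const_zero, neg_zero]

lemma hW4_of_reg [IsDomain A] [UniqueFactorizationMonoid A] (σ : Matrix (Fin (d+2)) (Fin d) A)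
    (hW : ∀ π : A, Prime π → ∃ r s, ¬ π ∣ W σ r s) (h0 : ∃ x : A, Prime x)
    (hreg : ∃ α ∈ WI σ, ∃ β ∈ WI σ, ∃ γ ∈ WI σ, α ≠ 0 ∧ (∀ a b, β * a = α * b → α ∣ a) ∧
      (∀ a b c, γ * a = α * b + β * c → ∃ b' c', a = α * b' + β * c')) :
    ∀ v : Fin (d+2) → A, (∀ j, ∑ t, σ t j * v t = 0) → ∃ c : Fin (d+2) → A, ∀ t, v t = ∑ r, c r * W σ r t := by
  intro v hv
  obtain ⟨α, hα, β, hβ, γ, hγ, hα0, h1, h2⟩ := hreg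
  obtain ⟨p, hp⟩ := WI_mul σ v hv α hα
  obtain ⟨q, hq⟩ := WI_mul σ v hv β hβ
  obtain ⟨r, hr⟩ := WI_mul σ v hv γ hγ
  have aux : ∀ (a b : A) (p q : Fin (d+2) → A) , (∀ t, a * v t = ∑ r, p r * W σ r t) →
      (∀ t, b * v t = ∑ r, q r * W σ r t) → ∃ s : Fin d → A, ∀ t, b * p t - a * q t = ∑ j, σ t j * s j := by
    intro a b p q hp hq
    apply kerW σ hW h0 (fun t => b * p t - a * q t)
    intro t
    simp only [sub_mul, Finset.sum_sub_distrib, mul_assoc, ← Finset.mul_sum, ← hp, ← hq]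
    ring
  obtain ⟨s1, hs1⟩ := aux α β p q hp hq
  obtain ⟨s2, hs2⟩ := aux α γ p r hp hr
  obtain ⟨s3, hs3⟩ := aux β γ q r hq hr
  obtain ⟨b, c, hbc⟩ := W_exists_ne σ hW h0
  have hinj : ∀ j, γ * s1 j = α * (- s3 j) + β * s2 j := by
    intro j
    have := W_cramer_inj σ b c (fun j => γ * s1 j - (α * (- s3 j) + β * s2 j)) j
    have hz : ∀ t, ∑ i, σ t i * (γ * s1 i - (α * (- s3 i) + β * s2 i)) = 0 := by
      intro t
      have e1 := hs1 t
      have e2 := hs2 t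
      have e3 := hs3 t
      have : ∑ i, σ t i * (γ * s1 i - (α * (- s3 i) + β * s2 i)) =
        γ * ∑ i, σ t i * s1 i + α * ∑ i, σ t i * s3 i - β * ∑ i, σ t i * s2 i := by
        simp only [Finset.mul_sum, ← Finset.sum_add_distrib, ← Finset.sum_sub_distrib]
        exact Finset.sum_congr rfl fun r _ => by ring
      rw [this, ← e1, ← e2, ← e3]; ring
    simp only [hz, mul_zero, Finset.sum_const_zero] at this
    exact sub_eq_zero.1 ((mul_eq_zero.1 this).resolve_left hbc)
  choose m1 m2 hm using fun j => h2 _ _ _ (hinj j)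
  have h3 : ∀ t, α ∣ p t - ∑ j, σ t j * m2 j := by
    intro t
    apply h1 _ (q t + ∑ j, σ t j * m1 j)
    have e1 := hs1 t
    have : ∑ j, σ t j * s1 j = α * ∑ j, σ t j * m1 j + β * ∑ j, σ t j * m2 j := by
      simp only [Finset.mul_sum, ← Finset.sum_add_distrib]
      exact Finset.sum_congr rfl fun r _ => by rw [hm]; ring
    linear_combination e1 + this
  choose p' hp' using h3
  refine ⟨p', fun t => mul_left_cancel₀ hα0 ?_⟩
  rw [hp t, Finset.mul_sum]
  have := W3' σ m2 t
  rw [← sub_zero (∑ r, p r * W σ r t), ← this, ← Finset.sum_sub_distrib]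
  exact Finset.sum_congr rfl fun r _ => by rw [← sub_mul, hp', mul_assoc]

end hW4sec


end part8

section part9

section dims

lemma trdeg_le_dim (k Q : Type) [Field k] [CommRing Q] [IsDomain Q] [Algebra k Q] [Algebra.FiniteType k Q] :
    ∃ s : ℕ, Algebra.trdeg k Q = s ∧ (s : WithBot ℕ∞) ≤ ringKrullDim Q := by
  obtain ⟨s, g, hg, hIntg⟩ := exists_integral_inj_algHom_of_fg k Q
  let _ : Algebra (MvPolynomial (Fin s) k) Q := g.toRingHom.toAlgebra
  have hsc : IsScalarTower k (MvPolynomial (Fin s) k) Q :=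
    IsScalarTower.of_algebraMap_eq fun x => (g.commutes x).symm
  have hi : Algebra.IsIntegral (MvPolynomial (Fin s) k) Q := ⟨hIntg⟩
  have hf : FaithfulSMul (MvPolynomial (Fin s) k) Q := (faithfulSMul_iff_algebraMap_injective _ _).2 hg
  refine ⟨s, ?_, ?_⟩
  · have h1 := trdeg_add_eq k (MvPolynomial (Fin s) k) (A := Q)
    have h3 : Algebra.IsAlgebraic (MvPolynomial (Fin s) k) Q := inferInstance
    have h2 : Algebra.trdeg (MvPolynomial (Fin s) k) Q = 0 := trdeg_eq_zero
    rw [← h1, h2, MvPolynomial.trdeg_of_isDomain]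
    simp
  · have hdim : ringKrullDim (MvPolynomial (Fin s) k) = s := by
      rw [MvPolynomial.ringKrullDim_of_isNoetherianRing, ringKrullDim_eq_zero_of_field]; simp
    rw [← hdim, ringKrullDim, Order.krullDim]
    refine iSup_le fun l => ?_
    have hbot : (⊥ : Ideal Q).IsPrime := Ideal.isPrime_bot
    obtain ⟨P, hP1, hP2, hP3⟩ := Ideal.exists_ideal_over_prime_of_isIntegral (S := Q) (RelSeries.head l).asIdeal ⊥ (by
      intro x hx
      have : x = 0 := hg (by rw [map_zero]; exact hx)
      rw [this]; exact Submodule.zero_mem _)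
    have : P.LiesOver (RelSeries.head l).asIdeal := ⟨hP3.symm⟩
    obtain ⟨L, hL, -⟩ := Ideal.exists_ltSeries_of_hasGoingUp l P
    rw [← hL]
    exact le_iSup (fun p : LTSeries (PrimeSpectrum Q) => ((p.length : ℕ) : WithBot ℕ∞)) L

lemma height_add_dim {R : Type} [CommRing R] (p : Ideal R) [hp : p.IsPrime] :
    (p.height : WithBot ℕ∞) + ringKrullDim (R ⧸ p) ≤ ringKrullDim R := by
  have : Nonempty (PrimeSpectrum R) := ⟨⟨p, hp⟩⟩
  have h1 : ringKrullDim (R ⧸ p) = (Order.coheight (⟨p, hp⟩ : PrimeSpectrum R) : ℕ∞) := by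
    rw [ringKrullDim_quotient, Order.coheight_eq_krullDim_Ici]
    rfl
  have h2 : p.height = Order.height (⟨p, hp⟩ : PrimeSpectrum R) :=
    PrimeSpectrum.height_eq_orderHeight ⟨p, hp⟩
  rw [h1, h2, ringKrullDim, Order.krullDim_eq_iSup_height_add_coheight_of_nonempty, ← WithBot.coe_add,
    WithBot.coe_le_coe]
  exact le_iSup (fun a : PrimeSpectrum R => Order.height a + Order.coheight a) _

lemma dim_ineq (k : Type) {R : Type} [Field k] [CommRing R] [Algebra k R] [Algebra.FiniteType k R]
    (p : Ideal R) [hp : p.IsPrime] (d : ℕ) (hd : ringKrullDim R ≤ d) :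
    ∃ c s : ℕ, p.height = c ∧ ringKrullDim (Localization.AtPrime p) = c ∧
      Algebra.trdeg k (R ⧸ p) = s ∧ s + c ≤ d := by
  obtain ⟨s, hs, hs'⟩ := trdeg_le_dim k (R ⧸ p)
  have hNoeth : IsNoetherianRing R := Algebra.FiniteType.isNoetherianRing k R
  obtain ⟨c, hc⟩ := ENat.ne_top_iff_exists.1 (Ideal.height_ne_top hp.ne_top)
  refine ⟨c, s, hc.symm, ?_, hs, ?_⟩
  · rw [IsLocalization.AtPrime.ringKrullDim_eq_height p, ← hc]; rfl
  · have := (height_add_dim p).trans hd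
    rw [← hc] at this
    have h3 : ((c : ℕ∞) : WithBot ℕ∞) + s ≤ d := (add_le_add_right hs' _).trans this
    have : ((c + s : ℕ) : WithBot ℕ∞) ≤ (d : ℕ) := by push_cast; exact h3
    have := (Nat.cast_le (α := WithBot ℕ∞)).1 this
    omega

lemma dim_ci {S : Type} [CommRing S] (f g : S) (m : ℕ) (hS : ringKrullDim S ≤ (m + 2 : ℕ))
    (hfg : RingTheory.Sequence.IsRegular S [f, g]) :
    ringKrullDim (S ⧸ (Ideal.span {f, g} : Ideal S)) ≤ m := by
  have hw := hfg.toIsWeaklyRegular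
  rw [RingTheory.Sequence.isWeaklyRegular_cons_iff] at hw
  obtain ⟨h1, h2⟩ := hw
  rw [RingTheory.Sequence.isWeaklyRegular_cons_iff] at h2
  have h2 := h2.1
  have hf : f ∈ nonZeroDivisors S := by
    rw [mem_nonZeroDivisors_iff_right]
    intro x hx
    apply h1
    simpa [mul_comm] using hx
  have hg : Ideal.Quotient.mk (Ideal.span {f}) g ∈ nonZeroDivisors (S ⧸ Ideal.span {f}) := by
    rw [mem_nonZeroDivisors_iff_right]
    intro x hx
    obtain ⟨x, rfl⟩ := Ideal.Quotient.mk_surjective x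
    rw [← map_mul, Ideal.Quotient.eq_zero_iff_mem, Ideal.mem_span_singleton] at hx
    obtain ⟨y, hy⟩ := hx
    have h3 : g • (Submodule.Quotient.mk x : QuotSMulTop f S) = g • (0 : QuotSMulTop f S) := by
      rw [smul_zero, ← Submodule.Quotient.mk_smul, Submodule.Quotient.mk_eq_zero, Submodule.mem_smul_pointwise_iff_exists]
      exact ⟨y, trivial, by simp [← hy, mul_comm]⟩
    have h4 := h2 h3
    rw [Submodule.Quotient.mk_eq_zero, Submodule.mem_smul_pointwise_iff_exists] at h4
    obtain ⟨z, -, hz⟩ := h4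
    rw [Ideal.Quotient.eq_zero_iff_mem, Ideal.mem_span_singleton]
    exact ⟨z, by simpa using hz.symm⟩
  have d1 := ringKrullDim_quotient_succ_le_of_nonZeroDivisor hf
  have d2 := ringKrullDim_quotient_succ_le_of_nonZeroDivisor hg
  let e : (S ⧸ Ideal.span {f}) ⧸ Ideal.span {Ideal.Quotient.mk (Ideal.span {f}) g} →+*
    S ⧸ (Ideal.span {f, g} : Ideal S) := Ideal.Quotient.lift _ (Ideal.Quotient.factor (Ideal.span_mono (by simp))) (by
      intro a ha
      obtain ⟨b, rfl⟩ := Ideal.mem_span_singleton.1 ha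
      rw [map_mul]
      have : (Ideal.Quotient.factor (Ideal.span_mono (by simp)) : (S ⧸ Ideal.span {f}) →+*  S ⧸ (Ideal.span {f, g} : Ideal S)) (Ideal.Quotient.mk (Ideal.span {f}) g) = 0 := by
        rw [Ideal.Quotient.factor_mk, Ideal.Quotient.eq_zero_iff_mem]
        exact Ideal.subset_span (by simp)
      rw [this, zero_mul])
  have he : Function.Surjective e := by
    intro x
    obtain ⟨x, rfl⟩ := Ideal.Quotient.mk_surjective x
    exact ⟨Ideal.Quotient.mk _ (Ideal.Quotient.mk _ x), by simp [e]⟩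
  have d3 := ringKrullDim_le_of_surjective e he
  have d4 : ringKrullDim (S ⧸ (Ideal.span {f, g} : Ideal S)) + 1 + 1 ≤ (m + 2 : ℕ) :=
    (add_le_add_left ((add_le_add_left d3 1).trans d2) 1).trans (d1.trans hS)
  rcases h : ringKrullDim (S ⧸ (Ideal.span {f, g} : Ideal S)) with _ | x
  · exact bot_le
  · rw [h] at d4
    rcases x with _ | x
    · exact absurd d4 (by 
        intro h
        have : (⊤ : ℕ∞) ≤ ((m + 2 : ℕ) : ℕ∞) := WithBot.coe_le_coe.1 h
        exact ENat.natCast_ne_top _ (top_le_iff.1 this))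
    · have : ((x + 1 + 1 : ℕ) : WithBot ℕ∞) ≤ (m + 2 : ℕ) := by exact d4
      have := (Nat.cast_le (α := WithBot ℕ∞)).1 this
      have h5 : x ≤ m := by omega
      exact (Nat.cast_le (α := WithBot ℕ∞)).2 h5

end dims


end part9

section part10

lemma trdeg_hyp {k ι P : Type} [Field k] [Fintype ι] [CommRing P] [Algebra k P]
    (e : MvPolynomial ι k ≃ₐ[k] P) (m : ℕ) (hm : Fintype.card ι = m + 1) (h : P) (hh : Prime h) :
    (m : Cardinal) ≤ Algebra.trdeg k (P ⧸ Ideal.span {h}) := by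
  classical
  set h' := e.symm h with hh'
  have hp : Prime h' := (MulEquiv.prime_iff e.symm.toMulEquiv).2 hh
  have hi : ∃ i, degreeOf i h' ≠ 0 := by
    by_contra! hall
    have h1 : h'.totalDegree = 0 := by
      rw [totalDegree_eq_zero_iff]
      intro m hm x
      have := monomial_le_degreeOf x hm
      rw [hall x] at this
      omega
    rw [totalDegree_eq_zero_iff_eq_C] at h1
    have h2 : coeff 0 h' ≠ 0 := by
      intro h0; rw [h0, C_0] at h1; exact hp.ne_zero h1
    apply hp.not_isUnit
    rw [h1]
    exact (isUnit_iff_ne_zero.2 h2).map C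
  obtain ⟨i, hi⟩ := hi
  have hai : AlgebraicIndependent k (fun j : {j : ι // j ≠ i} => (Ideal.Quotient.mk (Ideal.span {h}) (e (X j.1)) : P ⧸ Ideal.span {h})) := by
    rw [algebraicIndependent_iff]
    intro q hq
    have h1 : aeval (fun j : {j : ι // j ≠ i} => (Ideal.Quotient.mk (Ideal.span {h}) (e (X j.1)) : P ⧸ Ideal.span {h})) q
      = Ideal.Quotient.mk (Ideal.span {h}) (e (rename Subtype.val q)) := by
      have : aeval (fun j : {j : ι // j ≠ i} => (Ideal.Quotient.mk (Ideal.span {h}) (e (X j.1)) : P ⧸ Ideal.span {h})) =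
        ((Ideal.Quotient.mkₐ k (Ideal.span {h})).comp (e : MvPolynomial ι k →ₐ[k] P)).comp (rename Subtype.val) := by
        apply MvPolynomial.algHom_ext
        intro j
        simp
      rw [this]; rfl
    rw [h1, Ideal.Quotient.eq_zero_iff_mem, Ideal.mem_span_singleton] at hq
    have h2 : h' ∣ rename Subtype.val q := by
      have := map_dvd e.symm hq
      simpa using this
    by_contra hq0
    have hr0 : rename (Subtype.val : {j : ι // j ≠ i} → ι) q ≠ 0 := by
      intro h0
      exact hq0 (rename_injective _ Subtype.val_injective (by rw [h0, map_zero]))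
    obtain ⟨c, hc⟩ := h2
    have hc0 : c ≠ 0 := by rintro rfl; rw [mul_zero] at hc; exact hr0 hc
    have h3 := degreeOf_mul_eq (n := i) hp.ne_zero hc0
    rw [← hc] at h3
    have h4 : degreeOf i (rename (Subtype.val : {j : ι // j ≠ i} → ι) q) = 0 := by
      rw [← Nat.le_zero, degreeOf_le_iff]
      intro m hm
      by_contra hne0; have hne : m i ≠ 0 := by omega
      have : i ∈ (rename (Subtype.val : {j : ι // j ≠ i} → ι) q).vars := by
        rw [mem_vars]
        exact ⟨m, hm, by simpa using hne⟩
      have := vars_rename _ _ this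
      simp at this
    omega
  have := hai.cardinalMk_le_trdeg
  refine le_trans (le_of_eq ?_) this
  rw [Cardinal.mk_fintype, Fintype.card_subtype_compl, hm]
  simp

/-- generated bound: `Ω` is algebraic over `κ(η)` -/
lemma trdeg_le_finrank {κ Ω : Type} [Field κ] [Field Ω] [Algebra κ Ω] (V : Submodule κ Ω) (N : ℕ)
    [FiniteDimensional κ V] (hN : Module.finrank κ V ≤ N)
    (hV : Algebra.IsAlgebraic (Algebra.adjoin κ (V : Set Ω)) Ω) : Algebra.trdeg κ Ω ≤ N := by
  set b := Module.finBasis κ V with hb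
  set s : Set Ω := Set.range fun i => ((b i : V) : Ω) with hs
  have hadj : Algebra.adjoin κ (V : Set Ω) = Algebra.adjoin κ s := by
    apply le_antisymm
    · rw [Algebra.adjoin_le_iff]
      intro x hx
      have h1 : Submodule.span κ s = V := by
        have h2 := b.span_eq
        have := congrArg (Submodule.map V.subtype) h2
        rw [Submodule.map_span, Submodule.map_top, Submodule.range_subtype, ← Set.range_comp] at this
        exact this
      have h3 : x ∈ Submodule.span κ s := by rw [h1]; exact hx
      exact Algebra.span_le_adjoin κ s h3
    · apply Algebra.adjoin_mono
      rintro _ ⟨i, rfl⟩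
      exact (b i).2
  rw [hadj] at hV
  have := Algebra.IsAlgebraic.trdeg_le_cardinalMk κ s
  refine this.trans ?_
  refine Cardinal.mk_range_le.trans ?_
  rw [Cardinal.mk_fin]
  exact_mod_cast hN

section dimV
variable {R κ Ω : Type} [CommRing R] [Field κ] [Field Ω] [Algebra R κ] [Algebra κ Ω] [Algebra R Ω]
  [IsScalarTower R κ Ω]

/-- local number of generators bounds the dimension of the fibre image -/
lemma dimV_local {E : Type} [AddCommGroup E] [Module R E] (p : Ideal R) [p.IsPrime]
    (hp : p = RingHom.ker (algebraMap R Ω)) (θ : E →ₗ[R] Ω) (N : ℕ)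
    (hs : ∃ s : Finset (LocalizedModule p.primeCompl E), s.card ≤ N ∧
      Submodule.span (Localization.AtPrime p) (s : Set (LocalizedModule p.primeCompl E)) = ⊤) :
    ∃ V : Submodule κ Ω, FiniteDimensional κ V ∧ Module.finrank κ V ≤ N ∧ ∀ m, θ m ∈ V := by
  classical
  obtain ⟨s, hsN, hs⟩ := hs
  have hne : ∀ x ∈ p.primeCompl, algebraMap R Ω x ≠ 0 := by
    intro x hx h0
    apply hx
    rw [hp]; exact h0
  have hnek : ∀ x ∈ p.primeCompl, algebraMap R κ x ≠ 0 := by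
    intro x hx h0
    apply hne x hx
    rw [IsScalarTower.algebraMap_apply R κ Ω, h0, map_zero]
  have hunit : ∀ x : p.primeCompl, IsUnit ((algebraMap R (Module.End R Ω)) x) := by
    intro x
    rw [Module.End.isUnit_iff]
    constructor
    · intro a b hab
      have : algebraMap R Ω x * a = algebraMap R Ω x * b := by
        simpa [Algebra.smul_def] using hab
      exact mul_left_cancel₀ (hne x x.2) this
    · intro b
      refine ⟨(algebraMap R Ω x)⁻¹ * b, ?_⟩
      simp only [Module.algebraMap_end_apply, Algebra.smul_def]
      rw [mul_inv_cancel_left₀ (hne x x.2)]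
  let Θ : LocalizedModule p.primeCompl E →ₗ[R] Ω := LocalizedModule.lift p.primeCompl θ hunit
  have hΘ : ∀ m, Θ (LocalizedModule.mkLinearMap p.primeCompl E m) = θ m := by
    intro m
    exact LinearMap.congr_fun (LocalizedModule.lift_comp p.primeCompl θ hunit) m
  refine ⟨Submodule.span κ ((s.image Θ : Finset Ω) : Set Ω), inferInstance, ?_, ?_⟩
  · exact (finrank_span_finset_le_card _).trans (Finset.card_image_le.trans hsN)
  · intro m
    have hmem : ∀ z ∈ Submodule.span (Localization.AtPrime p) (s : Set (LocalizedModule p.primeCompl E)),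
        Θ z ∈ Submodule.span κ ((s.image Θ : Finset Ω) : Set Ω) := by
      intro z hz
      induction hz using Submodule.span_induction with
      | mem x h => exact Submodule.subset_span (by simpa using ⟨x, h, rfl⟩)
      | zero => simp
      | add x y _ _ hx hy => rw [map_add]; exact Submodule.add_mem _ hx hy
      | smul a x _ hx =>
        obtain ⟨r, t, rfl⟩ := IsLocalization.exists_mk'_eq p.primeCompl a
        have h1 : (t : R) • (IsLocalization.mk' (Localization.AtPrime p) r t • x) = r • x := by
          rw [← algebraMap_smul (Localization.AtPrime p) (t : R), ← mul_smul, IsLocalization.mk'_spec',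
            algebraMap_smul]
        have h2 := congrArg Θ h1
        rw [map_smul, LinearMap.map_smul Θ r x] at h2
        have h3 : Θ (IsLocalization.mk' (Localization.AtPrime p) r t • x) =
            ((algebraMap R κ t)⁻¹ * algebraMap R κ r) • Θ x := by
          rw [mul_smul, algebraMap_smul, ← h2, ← algebraMap_smul κ (t : R), smul_smul,
            inv_mul_cancel₀ (hnek t t.2), one_smul]
        rw [h3]
        exact Submodule.smul_mem _ _ hx
    rw [← hΘ]
    exact hmem _ (by rw [hs]; trivial)

/-- a rank bound: if `d'` independent relations hold. -/
lemma dimV_rel {n d' : ℕ} (η : Fin n → Ω) (M : Matrix (Fin n) (Fin d') κ)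
    (hM : ∀ j, ∑ i, M i j • η i = 0) (hind : LinearIndependent κ (fun j => fun i => M i j)) :
    Module.finrank κ (Submodule.span κ (Set.range η)) + d' ≤ n := by
  have h1 : Submodule.span κ (Set.range η) = LinearMap.range (Fintype.linearCombination κ η) := by
    rw [Fintype.range_linearCombination]
  rw [h1]
  have h2 := LinearMap.finrank_range_add_finrank_ker (Fintype.linearCombination κ η)
  rw [Module.finrank_fin_fun] at h2
  have h3 : d' ≤ Module.finrank κ (LinearMap.ker (Fintype.linearCombination κ η)) := by
    have h4 : Submodule.span κ (Set.range fun j => fun i => M i j) ≤ LinearMap.ker (Fintype.linearCombination κ η) := by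
      rw [Submodule.span_le]
      rintro _ ⟨j, rfl⟩
      simp only [SetLike.mem_coe, LinearMap.mem_ker, Fintype.linearCombination_apply]
      exact hM j
    have := Submodule.finrank_mono h4
    rw [finrank_span_eq_card hind, Fintype.card_fin] at this
    exact this
  omega

end dimV


end part10

section part11

lemma alg_of_frac {R κ Ω : Type} [CommRing R] [Field κ] [Field Ω] [Algebra R κ] [Algebra κ Ω] [Algebra R Ω]
    [IsScalarTower R κ Ω] {n : ℕ} (η : Fin n → Ω) (V : Submodule κ Ω) (hV : ∀ i, η i ∈ V)
    (hfrac : ∀ z : Ω, ∃ a ∈ Algebra.adjoin R (Set.range η), ∃ b ∈ Algebra.adjoin R (Set.range η), b ≠ 0 ∧ b * z = a) :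
    Algebra.IsAlgebraic (Algebra.adjoin κ (V : Set Ω)) Ω := by
  constructor
  intro z
  obtain ⟨a, ha, b, hb, hb0, hab⟩ := hfrac z
  have hle : ∀ x ∈ Algebra.adjoin R (Set.range η), x ∈ Algebra.adjoin κ (V : Set Ω) := by
    intro x hx
    induction hx using Algebra.adjoin_induction with
    | mem x hx => obtain ⟨i, rfl⟩ := hx; exact Algebra.subset_adjoin (hV i)
    | algebraMap r => rw [IsScalarTower.algebraMap_apply R κ Ω]; exact Subalgebra.algebraMap_mem _ _
    | add x y _ _ hx hy => exact add_mem hx hy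
    | mul x y _ _ hx hy => exact mul_mem hx hy
  refine ⟨Polynomial.C ⟨b, hle b hb⟩ * Polynomial.X - Polynomial.C ⟨a, hle a ha⟩, ?_, ?_⟩
  · intro h0
    have := congrArg (fun q => Polynomial.coeff q 1) h0
    simp [Polynomial.coeff_C] at this
    exact hb0 (congrArg Subtype.val this)
  · simp only [map_sub, map_mul, Polynomial.aeval_C, Polynomial.aeval_X]
    change b * z - a = 0
    rw [hab, sub_self]

lemma cols_indep {R κ : Type} [CommRing R] [Field κ] [Algebra R κ] [IsNoetherianRing R]
    {n d : ℕ} (p : Ideal R) [hpp : p.IsPrime] [Algebra (R ⧸ p) κ] [IsFractionRing (R ⧸ p) κ]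
    [IsScalarTower R (R ⧸ p) κ] (hmin : p.height = 0) (φ : Matrix (Fin n) (Fin d) R)
    (hinj : Function.Injective φ.mulVecLin) :
    LinearIndependent κ (fun j => fun i => algebraMap R κ (φ i j)) := by
  rw [← LinearIndependent.iff_fractionRing (R := R ⧸ p), Fintype.linearIndependent_iff]
  intro c hc
  have h1 : p ∈ associatedPrimes R R := by
    apply Module.associatedPrimes.minimalPrimes_annihilator_subset_associatedPrimes
    have : Module.annihilator R R = ⊥ := by
      rw [Module.annihilator_eq_bot]; infer_instance
    rw [this]
    exact Ideal.height_eq_zero_iff.1 hmin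
  obtain ⟨_, r, hr⟩ := (Submodule.isAssociatedPrime_iff).1 (show (⊥ : Submodule R R).IsAssociatedPrime p from h1)
  have hr' : ∀ x, x ∈ p ↔ x * r = 0 := by
    intro x
    rw [hr, Submodule.mem_colon_singleton, smul_eq_mul, Submodule.mem_bot]
  choose c' hc' using fun j => Ideal.Quotient.mk_surjective (I := p) (c j)
  have h2 : ∀ i, ∑ j, φ i j * c' j ∈ p := by
    intro i
    rw [← Ideal.Quotient.eq_zero_iff_mem]
    apply IsFractionRing.injective (R ⧸ p) κ
    have := congrFun hc i
    rw [map_zero, map_sum, map_sum]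
    simp only [Finset.sum_apply, Pi.smul_apply, Pi.zero_apply] at this
    rw [← this]
    refine Finset.sum_congr rfl fun j _ => ?_
    rw [map_mul, map_mul, hc', Algebra.smul_def, mul_comm]
    congr 1
    exact (IsScalarTower.algebraMap_apply R (R ⧸ p) κ _).symm
  have h3 : (fun j => c' j * r) = 0 := by
    apply hinj
    rw [map_zero]
    ext i
    have := (hr' _).1 (h2 i)
    rw [Finset.sum_mul] at this
    simp only [Matrix.mulVecLin_apply, Matrix.mulVec, dotProduct, Pi.zero_apply]
    rw [← this]
    exact Finset.sum_congr rfl fun j _ => by ring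
  intro j
  rw [← hc' j, Ideal.Quotient.eq_zero_iff_mem, hr']
  exact congrFun h3 j

section core
variable {k R κ Ω : Type} [Field k] [CommRing R] [Field κ] [Field Ω] [Algebra k R] [Algebra k κ] [Algebra k Ω]
  [Algebra R κ] [Algebra κ Ω] [Algebra R Ω] [IsScalarTower R κ Ω] [IsScalarTower k R κ] [IsScalarTower k κ Ω]
  [Algebra.FiniteType k R]

lemma key_core (p : Ideal R) [hpp : p.IsPrime] [Algebra (R ⧸ p) κ] [IsFractionRing (R ⧸ p) κ]
    [IsScalarTower R (R ⧸ p) κ] [IsScalarTower k (R ⧸ p) κ]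
    (d e : ℕ) (hd : 2 ≤ d) (hdim : ringKrullDim R ≤ d)
    (E : Type) [AddCommGroup E] [Module R E]
    (φ : Matrix (Fin (d + e)) (Fin d) R)
    (hinj : Function.Injective φ.mulVecLin)
    (π : (Fin (d + e) → R) →ₗ[R] E) (hsurj : Function.Surjective π)
    (hker : LinearMap.ker π = LinearMap.range φ.mulVecLin)
    (hGd : ∀ (p : Ideal R) (_ : p.IsPrime) (c : ℕ),
      ringKrullDim (Localization.AtPrime p) = (c : WithBot ℕ∞) → 1 ≤ c → c ≤ d - 1 →
      ∃ s : Finset (LocalizedModule p.primeCompl E), s.card ≤ c + e - 1 ∧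
        Submodule.span (Localization.AtPrime p)
          (s : Set (LocalizedModule p.primeCompl E)) = ⊤)
    (hne : ∃ i j, algebraMap R Ω (φ i j) ≠ 0)
    (η : Fin (d + e) → Ω) (hη : ∀ j, ∑ i, φ i j • η i = 0)
    (hfrac : ∀ z : Ω, ∃ a ∈ Algebra.adjoin R (Set.range η), ∃ b ∈ Algebra.adjoin R (Set.range η), b ≠ 0 ∧ b * z = a) :
    Algebra.trdeg k Ω ≤ (d + e : ℕ) := by
  have hNoeth : IsNoetherianRing R := Algebra.FiniteType.isNoetherianRing k R
  obtain ⟨c, s, hc, hc', hs, hsc⟩ := dim_ineq k p d hdim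
  have hpker : p = RingHom.ker (algebraMap R Ω) := by
    ext x
    rw [RingHom.mem_ker, IsScalarTower.algebraMap_apply R κ Ω, IsScalarTower.algebraMap_apply R (R ⧸ p) κ,
      map_eq_zero_iff _ (algebraMap κ Ω).injective, map_eq_zero_iff _ (IsFractionRing.injective (R ⧸ p) κ)]
    exact Ideal.Quotient.eq_zero_iff_mem.symm
  have hsκ : Algebra.trdeg k κ = s := by
    have : Algebra.IsAlgebraic (R ⧸ p) κ := IsLocalization.isAlgebraic _ (nonZeroDivisors (R ⧸ p))
    rw [← trdeg_add_eq k (R ⧸ p) (A := κ), hs, trdeg_eq_zero, add_zero]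
  have hsm : ∀ j, ∑ i, algebraMap R κ (φ i j) • η i = 0 := by
    intro j
    rw [← hη j]
    exact Finset.sum_congr rfl fun i _ => algebraMap_smul κ (φ i j) (η i)
  have main : ∃ (N : ℕ) (V : Submodule κ Ω), FiniteDimensional κ V ∧ Module.finrank κ V ≤ N ∧
      (∀ i, η i ∈ V) ∧ s + N ≤ d + e := by
    rcases Nat.eq_zero_or_pos c with h0 | h1
    · refine ⟨e, Submodule.span κ (Set.range η), FiniteDimensional.span_of_finite κ (Set.finite_range η), ?_, fun i => Submodule.subset_span ⟨i, rfl⟩, by omega⟩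
      have := dimV_rel η (fun i j => algebraMap R κ (φ i j)) hsm
        (cols_indep p (by rw [hc, h0]; rfl) φ hinj)
      omega
    · rcases le_or_gt c (d - 1) with h2 | h2
      · -- local generators
        obtain ⟨θ, hθ⟩ : ∃ θ : E →ₗ[R] Ω, ∀ i, θ (π (Pi.single i 1)) = η i := by
          let g : (Fin (d + e) → R) →ₗ[R] Ω := Fintype.linearCombination R η
          have hle : LinearMap.ker π ≤ LinearMap.ker g := by
            rw [hker]
            rintro _ ⟨v, rfl⟩
            rw [LinearMap.mem_ker]
            simp only [g, Fintype.linearCombination_apply, Matrix.mulVecLin_apply, Matrix.mulVec, dotProduct,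
              Finset.sum_smul]
            rw [Finset.sum_comm]
            refine Finset.sum_eq_zero fun j _ => ?_
            have : ∀ i, (φ i j * v j) • η i = v j • (φ i j • η i) := fun i => by rw [smul_smul, mul_comm]
            simp_rw [this]
            rw [← Finset.smul_sum, hη, smul_zero]
          refine ⟨((LinearMap.ker π).liftQ g hle).comp (π.quotKerEquivOfSurjective hsurj).symm.toLinearMap, fun i => ?_⟩
          have : (π.quotKerEquivOfSurjective hsurj).symm (π (Pi.single i 1)) = Submodule.Quotient.mk (Pi.single i 1) := by
            rw [LinearEquiv.symm_apply_eq]; rfl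
          simp only [LinearMap.comp_apply, LinearEquiv.coe_coe, this]
          change g (Pi.single i 1) = _
          simp [g]
        obtain ⟨V, hV1, hV2, hV3⟩ := dimV_local (κ := κ) p hpker θ (c + e - 1) (hGd p hpp c hc' h1 h2)
        exact ⟨c + e - 1, V, hV1, hV2, fun i => hθ i ▸ hV3 _, by omega⟩
      · obtain ⟨i0, j0, hij⟩ := hne
        refine ⟨d + e - 1, Submodule.span κ (Set.range η), FiniteDimensional.span_of_finite κ (Set.finite_range η), ?_, fun i => Submodule.subset_span ⟨i, rfl⟩, by omega⟩
        have := dimV_rel (d' := 1) η (fun i _ => algebraMap R κ (φ i j0)) (fun _ => hsm j0) (by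
          rw [linearIndependent_unique_iff]
          intro h
          have := congrFun h i0
          apply hij
          rw [IsScalarTower.algebraMap_apply R κ Ω]
          simp only [Pi.zero_apply] at this
          rw [this, map_zero])
        omega
  obtain ⟨N, V, hV1, hV2, hV3, hsN⟩ := main
  have hal := alg_of_frac η V hV3 hfrac
  have h4 := trdeg_le_finrank V N hV2 hal
  rw [← trdeg_add_eq k κ (A := Ω), hsκ]
  calc (s : Cardinal) + Algebra.trdeg κ Ω ≤ s + N := by gcongr
    _ ≤ (d + e : ℕ) := by exact_mod_cast hsN

end core

lemma key_field {k R Ω : Type} [Field k] [CommRing R] [Field Ω] [Algebra k R] [Algebra k Ω]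
    [Algebra R Ω] [IsScalarTower k R Ω] [Algebra.FiniteType k R]
    (d e : ℕ) (hd : 2 ≤ d) (hdim : ringKrullDim R ≤ d)
    (E : Type) [AddCommGroup E] [Module R E]
    (φ : Matrix (Fin (d + e)) (Fin d) R)
    (hinj : Function.Injective φ.mulVecLin)
    (π : (Fin (d + e) → R) →ₗ[R] E) (hsurj : Function.Surjective π)
    (hker : LinearMap.ker π = LinearMap.range φ.mulVecLin)
    (hGd : ∀ (p : Ideal R) (_ : p.IsPrime) (c : ℕ),
      ringKrullDim (Localization.AtPrime p) = (c : WithBot ℕ∞) → 1 ≤ c → c ≤ d - 1 →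
      ∃ s : Finset (LocalizedModule p.primeCompl E), s.card ≤ c + e - 1 ∧
        Submodule.span (Localization.AtPrime p)
          (s : Set (LocalizedModule p.primeCompl E)) = ⊤)
    (hne : ∃ i j, algebraMap R Ω (φ i j) ≠ 0)
    (η : Fin (d + e) → Ω) (hη : ∀ j, ∑ i, φ i j • η i = 0)
    (hfrac : ∀ z : Ω, ∃ a ∈ Algebra.adjoin R (Set.range η), ∃ b ∈ Algebra.adjoin R (Set.range η), b ≠ 0 ∧ b * z = a) :
    Algebra.trdeg k Ω ≤ (d + e : ℕ) := by
  set p := RingHom.ker (algebraMap R Ω) with hp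
  have hpp : p.IsPrime := RingHom.ker_isPrime _
  let _ : Algebra (R ⧸ p) Ω := (RingHom.kerLift (algebraMap R Ω)).toAlgebra
  have hf : FaithfulSMul (R ⧸ p) Ω := (faithfulSMul_iff_algebraMap_injective _ _).2 (RingHom.kerLift_injective _)
  have hs1 : IsScalarTower R (R ⧸ p) Ω := IsScalarTower.of_algebraMap_eq fun x => rfl
  let _ : Algebra (FractionRing (R ⧸ p)) Ω := FractionRing.liftAlgebra (R ⧸ p) Ω
  have hs2 : IsScalarTower (R ⧸ p) (FractionRing (R ⧸ p)) Ω := FractionRing.isScalarTower_liftAlgebra (R ⧸ p) Ω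
  have hs3 : IsScalarTower R (FractionRing (R ⧸ p)) Ω := IsScalarTower.of_algebraMap_eq fun x => by
    rw [IsScalarTower.algebraMap_apply R (R ⧸ p) Ω, IsScalarTower.algebraMap_apply R (R ⧸ p) (FractionRing (R ⧸ p)),
      ← IsScalarTower.algebraMap_apply (R ⧸ p) (FractionRing (R ⧸ p)) Ω]
  have hs4 : IsScalarTower k (FractionRing (R ⧸ p)) Ω := IsScalarTower.of_algebraMap_eq fun x => by
    rw [IsScalarTower.algebraMap_apply k R Ω, IsScalarTower.algebraMap_apply k R (FractionRing (R ⧸ p)),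
      ← IsScalarTower.algebraMap_apply R (FractionRing (R ⧸ p)) Ω]
  exact key_core (κ := FractionRing (R ⧸ p)) p d e hd hdim E φ hinj π hsurj hker hGd hne η hη hfrac


end part11

section part12

lemma not_both {T : Type} [CommRing T] [IsDomain T] (h : PP T) (hh : Prime h) (h0 : h ∣ X 0) (h1 : h ∣ X 1) : False := by
  have hp0 : Prime (X 0 : PP T) := MvPolynomial.X_prime
  have h2 : Associated h (X 0) := hh.irreducible.associated_of_dvd hp0.irreducible h0
  have h3 : (X 0 : PP T) ∣ X 1 := h2.symm.dvd.trans h1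
  rw [X_dvd_X] at h3
  simp at h3

lemma quad_map {k T : Type} [CommRing k] [CommRing T] (g : k →+* T) {d : ℕ} (cf : Fin (d+2) → Fin (d+2) → k) :
    MvPolynomial.map g (quad cf : BB k d) = quad (fun i j => g (cf i j)) := by
  simp [quad]

lemma frac_gen {R D Ω T : Type} [CommRing R] [CommRing T] [IsDomain T] [CommRing D] [Field Ω] [Algebra R Ω] [Algebra D Ω]
    [IsFractionRing D Ω] (q : PP T →+* D) (hq : Function.Surjective q) (𝒜 : Subalgebra R Ω)
    (hT : ∀ a, algebraMap D Ω (q (C a)) ∈ 𝒜) (Δ : T) (hΔ : algebraMap D Ω (q (C Δ)) ≠ 0)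
    (hX : ∀ i, algebraMap D Ω (q (C Δ * X i)) ∈ 𝒜) (z : Ω) :
    ∃ a ∈ 𝒜, ∃ b ∈ 𝒜, b ≠ 0 ∧ b * z = a := by
  have key : ∀ p : PP T, ∃ N : ℕ, algebraMap D Ω (q (C Δ)) ^ N * algebraMap D Ω (q p) ∈ 𝒜 := by
    intro p
    induction p using MvPolynomial.induction_on with
    | C a => exact ⟨0, by simpa using hT a⟩
    | add p p' h h' =>
      obtain ⟨N, h⟩ := h
      obtain ⟨N', h'⟩ := h'
      refine ⟨N + N', ?_⟩
      have : algebraMap D Ω (q (C Δ)) ^ (N + N') * algebraMap D Ω (q (p + p')) =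
        algebraMap D Ω (q (C Δ)) ^ N' * (algebraMap D Ω (q (C Δ)) ^ N * algebraMap D Ω (q p)) +
        algebraMap D Ω (q (C Δ)) ^ N * (algebraMap D Ω (q (C Δ)) ^ N' * algebraMap D Ω (q p')) := by
        rw [map_add, map_add]; ring
      rw [this]
      exact add_mem (mul_mem (pow_mem (hT Δ) _) h) (mul_mem (pow_mem (hT Δ) _) h')
    | mul_X p i h =>
      obtain ⟨N, h⟩ := h
      refine ⟨N + 1, ?_⟩
      have : algebraMap D Ω (q (C Δ)) ^ (N + 1) * algebraMap D Ω (q (p * X i)) =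
        (algebraMap D Ω (q (C Δ)) ^ N * algebraMap D Ω (q p)) * algebraMap D Ω (q (C Δ * X i)) := by
        rw [map_mul, map_mul, map_mul, map_mul]; ring
      rw [this]
      exact mul_mem h (hX i)
  obtain ⟨x, y, hy, rfl⟩ := IsFractionRing.div_surjective (A := D) z
  obtain ⟨x, rfl⟩ := hq x
  obtain ⟨y, rfl⟩ := hq y
  obtain ⟨N, hN⟩ := key x
  obtain ⟨M, hM⟩ := key y
  have hy0 : algebraMap D Ω (q y) ≠ 0 := by
    have : Nontrivial D := (algebraMap D Ω).domain_nontrivial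
    exact IsFractionRing.to_map_ne_zero_of_mem_nonZeroDivisors hy
  refine ⟨_, mul_mem (pow_mem (hT Δ) M) hN, _, mul_mem (pow_mem (hT Δ) N) hM, ?_, ?_⟩
  · exact mul_ne_zero (pow_ne_zero _ hΔ) (mul_ne_zero (pow_ne_zero _ hΔ) hy0)
  · field_simp

lemma HK_main {k R : Type} [Field k] [CommRing R] [Algebra k R] [Algebra.FiniteType k R] (d e : ℕ) (hd : 2 ≤ d)
    (hdimR : ringKrullDim R ≤ d)
    (cf cg : Fin (d+2) → Fin (d+2) → k)
    (mkR : MvPolynomial (Fin (d + 2)) k →ₐ[k] R) (hmk : Function.Surjective mkR)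
    (hkR : RingHom.ker mkR.toRingHom = Ideal.span {(quad cf : BB k d), (quad cg : BB k d)})
    (E : Type) [AddCommGroup E] [Module R E]
    (ψ : Matrix (Fin (d + e)) (Fin d) (MvPolynomial (Fin (d + 2)) k))
    (φ : Matrix (Fin (d + e)) (Fin d) R)
    (hφψ : ∀ i j, φ i j = mkR (ψ i j))
    (hinj : Function.Injective φ.mulVecLin)
    (π : (Fin (d + e) → R) →ₗ[R] E)
    (hsurj : Function.Surjective π)
    (hker : LinearMap.ker π = LinearMap.range φ.mulVecLin)
    (hI1 : Ideal.span {r | ∃ i j, φ i j = r} =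
      Ideal.span (Set.range fun t : Fin (d + 2) => mkR (X t)))
    (hGd : ∀ (p : Ideal R) (_ : p.IsPrime) (c : ℕ),
      ringKrullDim (Localization.AtPrime p) = (c : WithBot ℕ∞) → 1 ≤ c → c ≤ d - 1 →
      ∃ s : Finset (LocalizedModule p.primeCompl E), s.card ≤ c + e - 1 ∧
        Submodule.span (Localization.AtPrime p)
          (s : Set (LocalizedModule p.primeCompl E)) = ⊤)
    (σ : Matrix (Fin (d + 2)) (Fin d) (MvPolynomial (Fin (d + e)) k))
    (hσ : ∀ j, ell σ j = ∑ i, MvPolynomial.map C (ψ i j) * C (X i)) :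
    HK σ (fun i j => C (cf i j)) (fun i j => C (cg i j)) := by
  intro r s hΔ h hh h1 h2
  by_contra hnd
  set D := PP (MvPolynomial (Fin (d + e)) k) ⧸ Ideal.span {h} with hD
  have hprime : (Ideal.span {h}).IsPrime := (Ideal.span_singleton_prime hh.ne_zero).2 hh
  have hdom : IsDomain D := Ideal.Quotient.isDomain _
  set Ω := FractionRing D with hΩ
  have hinjD : Function.Injective (algebraMap D Ω) := IsFractionRing.injective D Ω
  let q : PP (MvPolynomial (Fin (d + e)) k) →+* D := Ideal.Quotient.mk _
  have hq0 : ∀ x, algebraMap D Ω (q x) = 0 ↔ h ∣ x := by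
    intro x
    rw [map_eq_zero_iff _ hinjD, Ideal.Quotient.eq_zero_iff_mem, Ideal.mem_span_singleton]
  let Φ : MvPolynomial (Fin (d + 2)) k →+* Ω :=
    ((algebraMap D Ω).comp q).comp ((rho σ r s).toRingHom.comp (MvPolynomial.map C))
  have hΦ : ∀ x, Φ x = algebraMap D Ω (q (rho σ r s (MvPolynomial.map C x))) := fun x => rfl
  have hle : RingHom.ker mkR.toRingHom ≤ RingHom.ker Φ := by
    rw [hkR, Ideal.span_le]
    rintro x (rfl | rfl)
    · change Φ _ = 0
      rw [hΦ, hq0, quad_map]; exact h1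
    · change Φ _ = 0
      rw [hΦ, hq0, quad_map]; exact h2
  let lft : R →+* Ω := RingHom.liftOfSurjective mkR.toRingHom hmk ⟨Φ, hle⟩
  have hlft : ∀ x, lft (mkR x) = Φ x := fun x => RingHom.liftOfRightInverse_comp_apply _ _ _ _ x
  let _ : Algebra R Ω := lft.toAlgebra
  have hsc : IsScalarTower k R Ω := IsScalarTower.of_algebraMap_eq fun x => by
    change _ = lft (algebraMap k R x)
    rw [← mkR.commutes, hlft, hΦ, MvPolynomial.algebraMap_eq, map_C, rho_C]
    rfl
  let η : Fin (d + e) → Ω := fun i => algebraMap D Ω (q (C (X i)))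
  have htr := key_field (k := k) (R := R) (Ω := Ω) d e hd hdimR E φ hinj π hsurj hker hGd ?_ η ?_ ?_
  · have h3 := trdeg_hyp (MvPolynomial.sumAlgEquiv k (Fin 2) (Fin (d + e))) (d + e + 1) (by simp; omega) h hh
    have h4 : Algebra.trdeg k D ≤ Algebra.trdeg k Ω := by
      have hal : Algebra.IsAlgebraic D Ω := IsLocalization.isAlgebraic _ (nonZeroDivisors D)
      rw [← trdeg_add_eq k D (A := Ω)]
      exact le_self_add
    have h5 := (h3.trans h4).trans htr
    have h6 : d + e + 1 ≤ d + e := by exact_mod_cast h5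
    omega
  · by_contra! hall
    have h3 : Ideal.span {r | ∃ i j, φ i j = r} ≤ RingHom.ker lft := by
      rw [Ideal.span_le]
      rintro _ ⟨i, j, rfl⟩
      exact hall i j
    rw [hI1] at h3
    have h4 : ∀ t, h ∣ xi σ r s t := by
      intro t
      have h5 : lft (mkR (X t)) = 0 := h3 (Ideal.subset_span ⟨t, rfl⟩)
      rw [hlft, hΦ, hq0, map_X, rho_X] at h5
      exact h5
    have h5 := h4 s
    have h6 := h4 r
    rw [xi_s] at h5
    rw [xi_r, dvd_neg] at h6
    exact not_both h hh ((hh.dvd_or_dvd h5).resolve_left hnd) ((hh.dvd_or_dvd h6).resolve_left hnd)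
  · intro j
    have h3 := congrArg (fun x => algebraMap D Ω (q x)) (rho_ell σ r s j)
    simp only [hσ, map_sum, map_mul, rho_C, map_zero] at h3
    rw [← h3]
    refine Finset.sum_congr rfl fun i _ => ?_
    rw [Algebra.smul_def, hφψ]
    change lft (mkR _) * _ = _
    rw [hlft, hΦ]
  · have hR : ∀ x, Φ x ∈ Algebra.adjoin R (Set.range η) := by
      intro x
      rw [← hlft]
      exact Subalgebra.algebraMap_mem _ _
    refine frac_gen q Ideal.Quotient.mk_surjective _ ?_ (W σ r s) (by rwa [Ne, hq0]) ?_
    · intro a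
      induction a using MvPolynomial.induction_on with
      | C a =>
        have := hR (C a)
        rw [hΦ, map_C, rho_C] at this
        exact this
      | add a b ha hb => rw [C_add, map_add, map_add]; exact add_mem ha hb
      | mul_X a i ha => rw [C_mul, map_mul, map_mul]; exact mul_mem ha (Algebra.subset_adjoin ⟨i, rfl⟩)
    · intro i
      fin_cases i
      · have := hR (X s)
        rw [hΦ, map_X, rho_X, xi_s] at this
        exact this
      · have := neg_mem (hR (X r))
        rw [hΦ, map_X, rho_X, xi_r, map_neg, map_neg, neg_neg] at this
        exact this


end part12

section part13

lemma W_homog {k ι : Type} [Field k] {d : ℕ} (σ : Matrix (Fin (d+2)) (Fin d) (MvPolynomial ι k))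
    (h : ∀ i j, (σ i j).IsHomogeneous 1) (a b) : (W σ a b).IsHomogeneous d := by
  unfold W Wd
  rw [Matrix.det_apply]
  refine IsHomogeneous.sum _ _ _ fun τ _ => ?_
  have h1 : (∏ i, Wmat σ (Pi.single a 1) (Pi.single b 1) (τ i) i).IsHomogeneous d := by
    have h2 := IsHomogeneous.prod Finset.univ (fun i => Wmat σ (Pi.single a 1) (Pi.single b 1) (τ i) i)
      (Fin.append (fun _ : Fin d => 1) ![0, 0]) ?_
    · convert h2 using 1
      rw [Fin.sum_univ_add]
      simp
    · intro i _
      refine Fin.addCases (fun j => ?_) (fun j => ?_) i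
      · rw [Wmat_castAdd, Fin.append_left]; exact h _ _
      · have hs : ∀ (x y : Fin (d+2)), ((Pi.single x 1 : Fin (d+2) → MvPolynomial ι k) y).IsHomogeneous 0 := by
          intro x y
          rw [Pi.single_apply]
          split_ifs
          · exact isHomogeneous_one _ _
          · exact isHomogeneous_zero _ _ _
        simp only [Wmat, Matrix.of_apply, Fin.append_right]
        fin_cases j
        · simpa using hs _ _
        · simpa using hs _ _
  rw [Units.smul_def, zsmul_eq_mul]
  have h3 : ((Equiv.Perm.sign τ : ℤ) : MvPolynomial ι k) = C ((Equiv.Perm.sign τ : ℤ) : k) := by simp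
  rw [h3]
  exact hom_C_mul _ h1

lemma exists_quad {k : Type} [Field k] {d : ℕ} (f : MvPolynomial (Fin (d+2)) k) (hf : f.IsHomogeneous 2) :
    ∃ cf : Fin (d+2) → Fin (d+2) → k, f = quad cf := by
  classical
  have h1 : ∀ m ∈ f.support, ∃ cf : Fin (d+2) → Fin (d+2) → k, monomial m (coeff m f) = quad cf := by
    intro m hm
    have hdeg : m.degree = 1 + 1 := by
      have := hf (mem_support_iff.1 hm)
      rw [Finsupp.degree_eq_weight_one]; exact this
    obtain ⟨i, m', rfl, hm'⟩ := degree_succ hdeg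
    obtain ⟨j, m'', rfl, hm''⟩ := degree_succ (n := 0) hm'
    have : m'' = 0 := (Finsupp.degree_eq_zero_iff _).1 hm''
    subst this
    refine ⟨fun i' j' => if i' = i then (if j' = j then coeff (Finsupp.single i 1 + (Finsupp.single j 1 + 0)) f else 0) else 0, ?_⟩
    generalize coeff (Finsupp.single i 1 + (Finsupp.single j 1 + 0)) f = c
    unfold quad
    rw [Finset.sum_eq_single i, Finset.sum_eq_single j]
    · simp [X, C_mul_monomial, monomial_mul]
    · intro b _ hb; simp [hb]
    · simp
    · intro b _ hb; simp [hb]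
    · simp
  choose! cf hcf using h1
  refine ⟨fun i j => ∑ m ∈ f.support, cf m i j, ?_⟩
  conv_lhs => rw [f.as_sum]
  rw [Finset.sum_congr rfl hcf]
  unfold quad
  rw [Finset.sum_comm]
  refine Finset.sum_congr rfl fun i _ => ?_
  rw [Finset.sum_comm]
  refine Finset.sum_congr rfl fun j _ => ?_
  rw [map_sum, Finset.sum_mul]

section theta
variable {k : Type} [Field k] {m n : ℕ}

abbrev Th (k : Type) [Field k] (m n : ℕ) := MvPolynomial.sumAlgEquiv k (Fin m) (Fin n)

lemma Th_X_inl (t) : Th k m n (X (Sum.inl t)) = X t := by simp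
lemma Th_C (c) : Th k m n (C c) = C (C c) := (Th k m n).commutes c
lemma Th_inl (p) : Th k m n (rename Sum.inl p) = MvPolynomial.map C p := by
  have : ((Th k m n).toAlgHom.comp (rename Sum.inl)).toRingHom = MvPolynomial.map C := by
    apply MvPolynomial.ringHom_ext
    · intro r; simp
    · intro i; simp
  exact RingHom.congr_fun this p
lemma Th_inr (p) : Th k m n (rename Sum.inr p) = C p := by
  have : ((Th k m n).toAlgHom.comp (rename Sum.inr)).toRingHom = C := by
    apply MvPolynomial.ringHom_ext
    · intro r; simp
    · intro i; simp
  exact RingHom.congr_fun this p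

lemma Th_monomial (w : Fin m ⊕ Fin n → ℕ) (hl : ∀ t, w (Sum.inl t) = 1) (hr : ∀ t, w (Sum.inr t) = 0) (a) :
    ∀ c, (Th k m n (monomial a c)).IsHomogeneous (Finsupp.weight w a) := by
  induction a using Finsupp.induction_linear with
  | zero => intro c; rw [map_zero, ← C_apply, Th_C]; exact isHomogeneous_C _ _
  | add a b ha hb =>
    intro c
    have : (monomial (a + b) c : MvPolynomial (Fin m ⊕ Fin n) k) = monomial a c * monomial b 1 := by simp [monomial_mul]
    rw [this, map_mul, map_add]
    exact (ha c).mul (hb 1)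
  | single i j =>
    intro c
    rw [← C_mul_X_pow_eq_monomial, map_mul, map_pow, Th_C, Finsupp.weight_single]
    apply hom_C_mul
    rcases i with t | t
    · rw [Th_X_inl, hl]
      simpa using (isHomogeneous_X (MvPolynomial (Fin n) k) t).pow j
    · rw [hr]
      have : Th k m n (X (Sum.inr t)) = C (X t) := by simp
      rw [this, ← C_pow]
      rw [smul_eq_mul, mul_zero]; exact isHomogeneous_C _ _

lemma Th_hom (w : Fin m ⊕ Fin n → ℕ) (hl : ∀ t, w (Sum.inl t) = 1) (hr : ∀ t, w (Sum.inr t) = 0)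
    (p : MvPolynomial (Fin m ⊕ Fin n) k) (N) (hp : p.IsWeightedHomogeneous w N) : (Th k m n p).IsHomogeneous N := by
  rw [p.as_sum, map_sum]
  refine IsHomogeneous.sum _ _ _ fun a ha => ?_
  rw [← hp (mem_support_iff.1 ha)]
  exact Th_monomial w hl hr a _

lemma rename_inr_hom {M : Type} [AddCommMonoid M] (w : Fin m ⊕ Fin n → M) (β : M) (hr : ∀ t, w (Sum.inr t) = β)
    (p : MvPolynomial (Fin n) k) (N : ℕ) (hp : p.IsHomogeneous N) :
    (rename Sum.inr p : MvPolynomial (Fin m ⊕ Fin n) k).IsWeightedHomogeneous w (N • β) := by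
  intro a ha
  obtain ⟨u, rfl, hu⟩ := coeff_rename_ne_zero _ _ _ ha
  have h1 := hp hu
  rw [← h1]
  clear h1 hu ha hp
  induction u using Finsupp.induction_linear with
  | zero => simp
  | add a b ha hb => rw [Finsupp.mapDomain_add, map_add, ha, hb, map_add, add_smul]
  | single i j => rw [Finsupp.mapDomain_single, Finsupp.weight_single, Finsupp.weight_single, hr]; simp

end theta

end part13

section part14

lemma min_count {k T Q : Type} [Field k] [CommRing T] [AddCommGroup Q] [Module T Q] (ε : T →+* k) (N : ℕ)
    (a : Fin N → Q) (hrel : ∀ c : Fin N → T, ∑ r, c r • a r = 0 → ∀ r, ε (c r) = 0)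
    (s : Finset Q) (hs : Submodule.span T (s : Set Q) = Submodule.span T (Set.range a)) : N ≤ s.card := by
  classical
  have h1 : ∀ r, ∃ t : s → T, ∑ i : s, t i • (i : Q) = a r := by
    intro r
    have : a r ∈ Submodule.span T (Set.range (Subtype.val : s → Q)) := by
      have h : Set.range (Subtype.val : s → Q) = (s : Set Q) := by ext; simp
      rw [h, hs]; exact Submodule.subset_span ⟨r, rfl⟩
    exact (Submodule.mem_span_range_iff_exists_fun T).1 this
  have h2 : ∀ i : s, ∃ u : Fin N → T, ∑ q, u q • a q = (i : Q) := by
    intro i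
    have : (i : Q) ∈ Submodule.span T (Set.range a) := by
      rw [← hs]; exact Submodule.subset_span i.2
    exact (Submodule.mem_span_range_iff_exists_fun T).1 this
  choose t ht using h1
  choose u hu using h2
  have h3 : ∀ r q, ε ((if q = r then 1 else 0) - ∑ i, t r i * u i q) = 0 := by
    intro r
    apply hrel
    simp only [sub_smul, Finset.sum_sub_distrib, ite_smul, one_smul, zero_smul, Finset.sum_ite_eq',
      Finset.mem_univ, if_true, Finset.sum_smul]
    rw [Finset.sum_comm, sub_eq_zero]
    conv_lhs => rw [← ht r]
    refine Finset.sum_congr rfl fun i _ => ?_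
    conv_lhs => rw [← hu i]
    rw [Finset.smul_sum]
    exact Finset.sum_congr rfl fun q _ => by rw [smul_smul]
  let P : Matrix (Fin N) s k := Matrix.of fun r i => ε (t r i)
  let U : Matrix s (Fin N) k := Matrix.of fun i q => ε (u i q)
  have h4 : P * U = 1 := by
    ext r q
    have := h3 r q
    rw [map_sub, sub_eq_zero, map_sum] at this
    simp only [Matrix.mul_apply, P, U, Matrix.of_apply, Matrix.one_apply]
    simp only [map_mul] at this
    rw [← this]
    by_cases h : r = q
    · simp [h]
    · simp [h, Ne.symm h]
  have h5 := Matrix.rank_mul_le_left P U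
  rw [h4, Matrix.rank_one, Fintype.card_fin] at h5
  have h6 := Matrix.rank_le_card_width P
  simp at h6
  omega

def gE {k : Type} [Field k] {d n : ℕ} (σ : Matrix (Fin (d+2)) (Fin d) (MvPolynomial (Fin n) k))
    (cf cg : Fin (d+2) → Fin (d+2) → k) (r : Fin (d+2)) : MvPolynomial (Fin (d+2) ⊕ Fin n) k :=
  ∑ i, ∑ j, ∑ a, ∑ b, C (cf i j * cg a b) *
    (rename Sum.inr (W σ r j) * X (Sum.inl b) * rename Sum.inr (W σ a i) +
      rename Sum.inr (W σ r a) * X (Sum.inl i) * rename Sum.inr (W σ b j))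

section gE
variable {k : Type} [Field k] {d n : ℕ} (σ : Matrix (Fin (d+2)) (Fin d) (MvPolynomial (Fin n) k))
    (cf cg : Fin (d+2) → Fin (d+2) → k)

lemma Th_gE (r) : Th k (d+2) n (gE σ cf cg r) = aa σ (fun i j => C (cf i j)) (fun i j => C (cg i j)) r := by
  unfold gE aa
  simp_rw [map_sum, map_mul, map_add, map_mul, Th_inr, Th_X_inl, Th_C]

lemma gE_hom {M : Type} [AddCommMonoid M] (w : Fin (d+2) ⊕ Fin n → M) (α β : M)
    (hl : ∀ t, w (Sum.inl t) = α) (hr : ∀ t, w (Sum.inr t) = β) (h : ∀ i j, (σ i j).IsHomogeneous 1) (r) :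
    (gE σ cf cg r).IsWeightedHomogeneous w (d • β + α + d • β) := by
  have hW : ∀ a b, (rename Sum.inr (W σ a b) : MvPolynomial (Fin (d+2) ⊕ Fin n) k).IsWeightedHomogeneous w (d • β) :=
    fun a b => rename_inr_hom w β hr _ _ (W_homog σ h a b)
  have hX : ∀ t, (X (Sum.inl t) : MvPolynomial (Fin (d+2) ⊕ Fin n) k).IsWeightedHomogeneous w α := by
    intro t; rw [← hl t]; exact isWeightedHomogeneous_X _ _ _
  unfold gE
  simp only [← mem_weightedHomogeneousSubmodule]
  refine Submodule.sum_mem _ fun i _ => Submodule.sum_mem _ fun j _ => Submodule.sum_mem _ fun a _ =>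
    Submodule.sum_mem _ fun b _ => ?_
  rw [← smul_eq_C_mul]
  refine Submodule.smul_mem _ _ (Submodule.add_mem _ ?_ ?_)
  · exact ((hW _ _).mul (hX _)).mul (hW _ _)
  · exact ((hW _ _).mul (hX _)).mul (hW _ _)

end gE

lemma mem_span_equiv {P Q : Type} [CommRing P] [CommRing Q] (e : P ≃+* Q) (s : Set P) (p : P) :
    p ∈ Ideal.span s ↔ e p ∈ Ideal.span (e '' s) := by
  have h : Ideal.span (e '' s) = (Ideal.span s).map e := (Ideal.map_span e s).symm
  rw [h, Ideal.mem_map_of_equiv]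
  constructor
  · intro hp; exact ⟨p, hp, rfl⟩
  · rintro ⟨x, hx, hxp⟩; rw [← e.injective hxp]; exact hx

lemma Th_LL {k : Type} [Field k] {d n : ℕ} (σ : Matrix (Fin (d+2)) (Fin d) (MvPolynomial (Fin n) k))
    (cf cg : Fin (d+2) → Fin (d+2) → k) (ℓ : Fin d → MvPolynomial (Fin (d+2) ⊕ Fin n) k)
    (hσ : ∀ j, ℓ j = ∑ t : Fin (d + 2), X (Sum.inl t) * (rename Sum.inr (σ t j)))
    (p : MvPolynomial (Fin (d+2) ⊕ Fin n) k) :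
    p ∈ Ideal.span (Set.range ℓ ∪ {rename Sum.inl (quad cf : BB k d), rename Sum.inl (quad cg : BB k d)}) ↔
      Th k (d+2) n p ∈ LL σ (fun i j => C (cf i j)) (fun i j => C (cg i j)) := by
  rw [mem_span_equiv (Th k (d+2) n).toRingEquiv, Set.image_union, Set.image_pair, ← Set.range_comp]
  have h1 : (⇑(Th k (d+2) n).toRingEquiv ∘ ℓ) = ell σ := by
    funext j
    change Th k (d+2) n (ℓ j) = _
    rw [hσ, map_sum, ell]
    exact Finset.sum_congr rfl fun t _ => by rw [map_mul, Th_X_inl, Th_inr]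
  have h2 : ∀ c : Fin (d+2) → Fin (d+2) → k, (Th k (d+2) n).toRingEquiv (rename Sum.inl (quad c : BB k d)) =
      quad (fun i j => C (c i j)) := by
    intro c
    change Th k (d+2) n _ = _
    rw [Th_inl, quad_map]
  rw [h1, h2, h2]
  rfl


end part14

end helpers

set_option synthInstance.maxHeartbeats 1000000
set_option maxHeartbeats 3000000

theorem ci_A1_generators
    (d e : ℕ) (hd : 2 ≤ d)
    -- `f, g`: a homogeneous `S`-regular sequence of quadrics in `S = k[x_1,…,x_{d+2}]`
    (f g : MvPolynomial (Fin (d + 2)) k)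
    (hf : f ∈ homogeneousSubmodule (Fin (d + 2)) k 2)
    (hg : g ∈ homogeneousSubmodule (Fin (d + 2)) k 2)
    (hfg : RingTheory.Sequence.IsRegular (MvPolynomial (Fin (d + 2)) k) [f, g])
    -- `E`: a module over `R = S/(f,g)`
    (E : Type) [AddCommGroup E]
    [Module (MvPolynomial (Fin (d + 2)) k ⧸
      (Ideal.span {f, g} : Ideal (MvPolynomial (Fin (d + 2)) k))) E]
    [Module.Finite (MvPolynomial (Fin (d + 2)) k ⧸
      (Ideal.span {f, g} : Ideal (MvPolynomial (Fin (d + 2)) k))) E]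
    -- `E` is torsion-free
    (htf : Submodule.torsion (MvPolynomial (Fin (d + 2)) k ⧸
      (Ideal.span {f, g} : Ideal (MvPolynomial (Fin (d + 2)) k))) E = ⊥)
    -- `ψ`: the matrix of linear forms over `S` lifting the presentation matrix `φ`
    (ψ : Matrix (Fin (d + e)) (Fin d) (MvPolynomial (Fin (d + 2)) k))
    (hψlin : ∀ i j, ψ i j ∈ homogeneousSubmodule (Fin (d + 2)) k 1)
    (φ : Matrix (Fin (d + e)) (Fin d) (MvPolynomial (Fin (d + 2)) k ⧸
      (Ideal.span {f, g} : Ideal (MvPolynomial (Fin (d + 2)) k))))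
    (hφψ : ∀ i j, φ i j = Ideal.Quotient.mk _ (ψ i j))
    -- `0 → R^d →φ R^{d+e} →π E → 0` is a (minimal) free resolution, so `pd_R E = 1`
    -- and `rank E = e`
    (hinj : Function.Injective φ.mulVecLin)
    (π : (Fin (d + e) → (MvPolynomial (Fin (d + 2)) k ⧸
        (Ideal.span {f, g} : Ideal (MvPolynomial (Fin (d + 2)) k)))) →ₗ[MvPolynomial (Fin (d + 2)) k ⧸
        (Ideal.span {f, g} : Ideal (MvPolynomial (Fin (d + 2)) k))] E)
    (hsurj : Function.Surjective π)
    (hker : LinearMap.ker π = LinearMap.range φ.mulVecLin)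
    -- `I_1(φ) = (x_1,…,x_{d+2})R`
    (hI1 : Ideal.span {r | ∃ i j, φ i j = r} =
      Ideal.span (Set.range fun t : Fin (d + 2) => Ideal.Quotient.mk _ (X t)))
    -- `E` is minimally generated by `μ(E) = d+e` elements
    (hμ : ∀ s : Finset E,
      Submodule.span (MvPolynomial (Fin (d + 2)) k ⧸
        (Ideal.span {f, g} : Ideal (MvPolynomial (Fin (d + 2)) k))) (s : Set E) = ⊤ →
      d + e ≤ s.card)
    -- `E` satisfies `G_d`
    (hGd : ∀ (p : Ideal (MvPolynomial (Fin (d + 2)) k ⧸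
        (Ideal.span {f, g} : Ideal (MvPolynomial (Fin (d + 2)) k)))) (_ : p.IsPrime) (c : ℕ),
      ringKrullDim (Localization.AtPrime p) = (c : WithBot ℕ∞) → 1 ≤ c → c ≤ d - 1 →
      ∃ s : Finset (LocalizedModule p.primeCompl E), s.card ≤ c + e - 1 ∧
        Submodule.span (Localization.AtPrime p)
          (s : Set (LocalizedModule p.primeCompl E)) = ⊤)
    -- the defining ideal `L = (ℓ_1,…,ℓ_d,f,g)` of `S(E)` as a quotient of
    -- `B = S ⊗_k T`, with `[ℓ_1 … ℓ_d] = [y_1 … y_{d+e}]·ψ`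
    (ℓ : Fin d → B k (d + 2) (d + e))
    (hℓ : ∀ i, ℓ i = ∑ j, (rename Sum.inl (ψ j i)) * X (Sum.inr j))
    (L : Ideal (B k (d + 2) (d + e)))
    (hL : L = Ideal.span (Set.range ℓ ∪ {rename Sum.inl f, rename Sum.inl g}))
    (σ : Matrix (Fin (d + 2)) (Fin d) (T k (d + e)))
    (hσlin : ∀ t j, σ t j ∈ homogeneousSubmodule (Fin (d + e)) k 1)
    (hσ : ∀ j, ℓ j =
      ∑ t : Fin (d + 2), X (Sum.inl t) * (rename Sum.inr (σ t j) : B k (d + 2) (d + e)))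
    -- `ht I(σ) = 3`
    (hht3 : htGE (minorsIdeal σ d) 3)
    (hht3' : ¬ htGE (minorsIdeal σ d) 4) :
    ∃ gEq : Fin (d + 2) → B k (d + 2) (d + e),
      (∀ i, gEq i ∈ weightedHomogeneousSubmodule k (bwt (d + 2) (d + e)) (1, 2 * d)) ∧
      AcompZ k (d + 2) (d + e) L 1 =
        Submodule.span (T k (d + e)) (Set.range fun i => Ideal.Quotient.mk L (gEq i)) ∧
      (∀ s : Finset (B k (d + 2) (d + e) ⧸ L),
        Submodule.span (T k (d + e)) (s : Set (B k (d + 2) (d + e) ⧸ L)) =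
          AcompZ k (d + 2) (d + e) L 1 → d + 2 ≤ s.card) := by
  obtain ⟨cf, rfl⟩ := exists_quad f hf
  obtain ⟨cg, rfl⟩ := exists_quad g hg
  have hσh : ∀ i j, (σ i j).IsHomogeneous 1 := hσlin
  -- transfer of the ideal
  have hLT : ∀ p, p ∈ L ↔ Th k (d + 2) (d + e) p ∈ LL σ (fun i j => C (cf i j)) (fun i j => C (cg i j)) := by
    intro p; rw [hL]; exact Th_LL σ cf cg ℓ hσ p
  -- the height hypothesis
  have hI : ∀ Q : Ideal (T k (d + e)), Q.IsPrime → WI σ ≤ Q → 3 ≤ Q.height := by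
    intro Q hQ hle
    have h1 := hht3 Q hQ (by
      refine le_trans ?_ hle
      rw [minorsIdeal, Ideal.span_le]
      rintro _ ⟨a, b, rfl⟩
      exact minor_mem σ a b)
    rw [IsLocalization.AtPrime.ringKrullDim_eq_height Q] at h1
    exact WithBot.coe_le_coe.1 h1
  have hW := hW_of_ht σ hI
  have h0 : ∃ x : T k (d + e), Prime x := ⟨X ⟨0, by omega⟩, X_prime⟩
  have hreg : ∃ α ∈ WI σ, ∃ β ∈ WI σ, ∃ γ ∈ WI σ, α ≠ 0 ∧ (∀ a b, β * a = α * b → α ∣ a) ∧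
      (∀ a b c, γ * a = α * b + β * c → ∃ b' c', a = α * b' + β * c') := by
    have : ∀ n : ℕ, 0 < n → ∀ J : Ideal (MvPolynomial (Fin n) k),
        (∀ Q : Ideal (MvPolynomial (Fin n) k), Q.IsPrime → J ≤ Q → 3 ≤ Q.height) →
        ∃ α ∈ J, ∃ β ∈ J, ∃ γ ∈ J, α ≠ 0 ∧ (∀ a b, β * a = α * b → α ∣ a) ∧
          (∀ a b c, γ * a = α * b + β * c → ∃ b' c', a = α * b' + β * c') := by
      rintro (_ | n) hn J hJ
      · omega
      · exact regtriple J hJ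
    exact this (d + e) (by omega) _ hI
  have hW4 := hW4_of_reg σ hW h0 hreg
  -- the key hypothesis
  have hK : HK σ (fun i j => C (cf i j)) (fun i j => C (cg i j)) := by
    refine HK_main d e hd ?_ cf cg (Ideal.Quotient.mkₐ k (Ideal.span {(quad cf : BB k d), (quad cg : BB k d)}))
      Ideal.Quotient.mk_surjective ?_ E ψ φ hφψ hinj π hsurj hker hI1 hGd σ ?_
    · refine dim_ci _ _ d (le_of_eq ?_) hfg
      rw [MvPolynomial.ringKrullDim_of_isNoetherianRing, ringKrullDim_eq_zero_of_field]
      simp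
    · exact Ideal.mk_ker
    · intro j
      have h1 := congrArg (Th k (d + 2) (d + e)) ((hσ j).symm.trans (hℓ j))
      simp only [map_sum, map_mul, Th_X_inl, Th_inr, Th_inl] at h1
      rw [ell, h1]
      refine Finset.sum_congr rfl fun i _ => ?_
      congr 1
      exact sumAlgEquiv_X_inr k (Fin (d + 2)) (Fin (d + e)) i
  have hsm : ∀ (t : T k (d + e)) (a : B k (d + 2) (d + e)),
      t • (Ideal.Quotient.mk L a) = Ideal.Quotient.mk L (rename Sum.inr t * a) := fun t a => rfl
  have hsum : ∀ c : Fin (d + 2) → T k (d + e),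
      ∑ r, c r • Ideal.Quotient.mk L (gE σ cf cg r) = Ideal.Quotient.mk L (∑ r, rename Sum.inr (c r) * gE σ cf cg r) := by
    intro c
    rw [map_sum]
    exact Finset.sum_congr rfl fun r _ => hsm _ _
  have hThsum : ∀ c : Fin (d + 2) → T k (d + e), Th k (d + 2) (d + e) (∑ r, rename Sum.inr (c r) * gE σ cf cg r) =
      ∑ r, C (c r) * aa σ (fun i j => C (cf i j)) (fun i j => C (cg i j)) r := by
    intro c
    rw [map_sum]
    exact Finset.sum_congr rfl fun r _ => by rw [map_mul, Th_inr, Th_gE]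
  have hspan : AcompZ k (d + 2) (d + e) L 1 =
        Submodule.span (T k (d + e)) (Set.range fun i => Ideal.Quotient.mk L (gE σ cf cg i)) := by
    apply le_antisymm
    · rintro z ⟨hz1, hz2⟩
      obtain ⟨a, rfl, ha⟩ : ∃ a, Ideal.Quotient.mk L a = z ∧ (Th k (d + 2) (d + e) a).IsHomogeneous 1 := by
        have hz3 : z ∈ SxDeg k (d + 2) (d + e) L 1 := hz2
        unfold SxDeg at hz3
        clear hz1 hz2
        induction hz3 using Submodule.span_induction with
        | mem x hx =>
          obtain ⟨a, ha, rfl⟩ := hx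
          exact ⟨a, rfl, Th_hom _ (fun _ => rfl) (fun _ => rfl) a 1 ha⟩
        | zero => exact ⟨0, map_zero _, by rw [map_zero]; exact isHomogeneous_zero _ _ _⟩
        | add x y _ _ hx hy =>
          obtain ⟨a, rfl, ha⟩ := hx
          obtain ⟨b, rfl, hb⟩ := hy
          exact ⟨a + b, map_add _ _ _, by rw [map_add]; exact ha.add hb⟩
        | smul t x _ hx =>
          obtain ⟨a, rfl, ha⟩ := hx
          exact ⟨rename Sum.inr t * a, rfl, by rw [map_mul, Th_inr]; exact hom_C_mul _ ha⟩
      have hz3 : Ideal.Quotient.mk L a ∈ H0 k (d + 2) (d + e) L := hz1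
      unfold H0 at hz3
      rw [Submodule.mem_iSup_of_directed] at hz3
      swap
      · refine Monotone.directed_le fun N M hNM => ?_
        exact Submodule.torsionBySet_le_torsionBySet_of_subset (Ideal.pow_le_pow_right hNM)
      obtain ⟨N, hN⟩ := hz3
      rw [Submodule.mem_torsionBySet_iff] at hN
      obtain ⟨c, hc⟩ := abs_main σ _ _ hW h0 hW4 hK _ ha N (by
        intro r s i j hij
        have hx : ∀ t, (X (Sum.inl t) : B k (d + 2) (d + e)) ∈ mxB k (d + 2) (d + e) := fun t =>
          Ideal.subset_span ⟨t, rfl⟩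
        have hmem : (X (Sum.inl s) ^ i * X (Sum.inl r) ^ j : B k (d + 2) (d + e)) ∈ mxB k (d + 2) (d + e) ^ N := by
          have h1 : (X (Sum.inl s) ^ i * X (Sum.inl r) ^ j : B k (d + 2) (d + e)) ∈ mxB k (d + 2) (d + e) ^ (i + j) := by
            rw [pow_add]
            exact Ideal.mul_mem_mul (Ideal.pow_mem_pow (hx s) _)
              (Ideal.pow_mem_pow (hx r) _)
          exact Ideal.pow_le_pow_right (by omega) h1
        have h2 := hN ⟨_, hmem⟩
        have h3 : Ideal.Quotient.mk L ((X (Sum.inl s) ^ i * X (Sum.inl r) ^ j) * a) = 0 := h2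
        rw [Ideal.Quotient.eq_zero_iff_mem, hLT, map_mul, map_mul, map_pow, map_pow, Th_X_inl, Th_X_inl] at h3
        exact h3)
      rw [← hThsum, ← map_sub, ← hLT, ← Ideal.Quotient.eq_zero_iff_mem, map_sub, sub_eq_zero, ← hsum] at hc
      rw [hc]
      exact Submodule.sum_mem _ fun r _ => Submodule.smul_mem _ _ (Submodule.subset_span ⟨r, rfl⟩)
    · rw [Submodule.span_le]
      rintro _ ⟨r, rfl⟩
      refine ⟨?_, ?_⟩
      · change Ideal.Quotient.mk L (gE σ cf cg r) ∈ H0 k (d + 2) (d + e) L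
        unfold H0
        refine Submodule.mem_iSup_of_mem 2 ?_
        rw [Submodule.mem_torsionBySet_iff]
        rintro ⟨b, hb⟩
        change Ideal.Quotient.mk L (b * gE σ cf cg r) = 0
        rw [Ideal.Quotient.eq_zero_iff_mem]
        have hle : mxB k (d + 2) (d + e) ^ 2 ≤ Submodule.colon L {gE σ cf cg r} := by
          rw [pow_two, mxB, Ideal.span_mul_span', Ideal.span_le]
          rintro _ ⟨_, ⟨s, rfl⟩, _, ⟨t, rfl⟩, rfl⟩
          rw [SetLike.mem_coe, Submodule.mem_colon_singleton, smul_eq_mul, hLT]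
          simp only [map_mul, Th_X_inl, Th_gE]
          rw [mul_assoc]
          exact abs_conv σ _ _ r s t
        have := hle hb
        rw [Submodule.mem_colon_singleton] at this
        exact this
      · change Ideal.Quotient.mk L (gE σ cf cg r) ∈ SxDeg k (d + 2) (d + e) L 1
        refine Submodule.subset_span ⟨_, ?_, rfl⟩
        have := gE_hom σ cf cg (wx (d + 2) (d + e)) 1 0 (fun _ => rfl) (fun _ => rfl) hσh r
        simpa using this
  refine ⟨gE σ cf cg, ?_, hspan, ?_⟩
  · intro r
    have := gE_hom σ cf cg (bwt (d + 2) (d + e)) (1, 0) (0, 1) (fun _ => rfl) (fun _ => rfl) hσh r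
    rw [mem_weightedHomogeneousSubmodule]
    convert this using 1
    simp [two_mul]
  · intro s hs
    rw [hspan] at hs
    refine min_count (constantCoeff : T k (d + e) →+* k) (d + 2) _ ?_ s hs
    intro c hc r
    rw [hsum, Ideal.Quotient.eq_zero_iff_mem, hLT, hThsum] at hc
    obtain ⟨b, hb⟩ := abs_rel σ _ _ hW h0 hK c hc
    rw [hb, map_sum]
    refine Finset.sum_eq_zero fun j _ => ?_
    have : constantCoeff (σ r j) = 0 := by
      by_contra hne
      have := hσh r j hne
      simp at this
    rw [map_mul, this, zero_mul]

end Stmt15
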